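/- arXiv:1405.1643 — 2 statements merged into one kernel-verified Lean document; each statement's English description precedes it below -/
import Mathlib

section
/- Let τ be a C¹ diffeomorphism of the open unit disk D = {p ∈ ℝ² : ‖p‖ < 1} onto itself such that τ ∘ τ = id and τ reverses orientation, i.e. the determinant of the derivative of τ is strictly negative at every point of D. Then the fixed-point set F = {p ∈ D : τ(p) = p} is nonempty, connected, closed in D, and is a 1-dimensional C¹ submanifold of D homeomorphic to ℝ (a single arc); moreover D \ F has exactly two connected components, which are interchanged by τ. -/
open Metric Set

/-! Identify `ℝ²` with `ℂ`. If `τ` had no fixed point, a continuous logarithm of `z - τ z` on the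
simply connected disk would lead to a contradiction. At a fixed point `p` the derivative of `τ` is a
linear reflection, with a unit normal vector `n` such that `dτ n = -n`; elsewhere let `n` be the
direction of `p - τ p`. The sign of `n` is ambiguous, but `n²` is well defined and continuous, also
at the fixed points, so it has a continuous square root `v`, and `v ∘ τ = v`. Hence the signed
displacement `h = ⟨v, p - τ p⟩` is continuous, changes sign under `τ`, and vanishes exactly on the
fixed-point set `F`; near a point of `F` the zero set and the sides of `h` are those of a `C¹`
submersion.

The map which is the identity where `h ≥ 0` and `τ` elsewhere folds the disk onto `{h ≥ 0}`, which
is therefore connected, and by the local picture at `F` so is `{h > 0}`. As the disk is simply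
connected, the intersection `F` of the connected closed sets `{h ≥ 0}` and `{h ≤ 0}`, which cover
the disk, is connected. If `F` were compact, `h` would have constant sign near the boundary of the
disk, which is impossible for an odd function. Finally `I v + dτ (I v)` is a continuous
nonvanishing field tangent to `F`. A maximal integral curve of it in `F` covers `F`, which is
connected, and is injective, since a closed orbit would make `F` compact. -/

namespace ReversingInvolution

open Filter Topology

section Topology

variable {X Y : Type*} [TopologicalSpace X] [TopologicalSpace Y]

theorem eq_of_exp_eq_const {s : Set X} (hs : IsPreconnected s) {θ : X → ℂ}
    (hθ : ContinuousOn θ s) {c : ℂ} (hc : ∀ x ∈ s, Complex.exp (θ x) = c) {x y : X}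
    (hx : x ∈ s) (hy : y ∈ s) : θ x = θ y :=
  Complex.isCoveringMap_exp.constOn_of_comp hs hθ
    (fun a ha b hb => Subtype.ext ((hc a ha).trans (hc b hb).symm)) hx hy

theorem exists_continuous_exp_eq [SimplyConnectedSpace X] [LocallyPathConnectedSpace X]
    {g : X → ℂ} (hg : Continuous g) (hg₀ : ∀ x, g x ≠ 0) :
    ∃ θ : X → ℂ, Continuous θ ∧ ∀ x, Complex.exp (θ x) = g x := by
  have x₀ : X := Classical.arbitrary X
  obtain ⟨θ, ⟨-, hθ⟩, -⟩ := Complex.isCoveringMap_exp.existsUnique_continuousMap_lifts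
    ⟨fun x => ⟨g x, hg₀ x⟩, by fun_prop⟩ x₀ (Complex.log (g x₀))
    (Subtype.ext (Complex.exp_log (hg₀ x₀)))
  exact ⟨θ, θ.continuous, fun x => congrArg Subtype.val (congrFun hθ x)⟩

/- A continuous logarithm `θ` of `ι x - ι (τ x)` would satisfy `exp (θ (τ x) - θ x) = -1`, so
`θ ∘ τ - θ` would be a nonzero constant, whereas applying `τ` changes its sign. -/
theorem exists_fixedPoint_of_involutive [SimplyConnectedSpace X] [LocallyPathConnectedSpace X]
    {ι : X → ℂ} (hι : Continuous ι) (hι_inj : Function.Injective ι) {τ : X → X}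
    (hτ : Continuous τ) (hinv : Function.Involutive τ) : ∃ x, τ x = x := by
  by_contra! hne
  have hsub (x : X) : ι x - ι (τ x) ≠ 0 := sub_ne_zero.2 fun h => hne x (hι_inj h).symm
  obtain ⟨θ, hθ, hexp⟩ := exists_continuous_exp_eq (g := fun x => ι x - ι (τ x)) (by fun_prop) hsub
  have hneg (x : X) : Complex.exp (θ (τ x) - θ x) = -1 := by
    rw [Complex.exp_sub, hexp, hexp, hinv, div_eq_iff (hsub x)]
    ring
  have x₀ : X := Classical.arbitrary X
  have hconst := eq_of_exp_eq_const isPreconnected_univ ((hθ.comp hτ).sub hθ).continuousOn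
    (fun x _ => hneg x) (mem_univ x₀) (mem_univ (τ x₀))
  have hzero : θ (τ x₀) - θ x₀ = 0 := by
    simp only [Pi.sub_apply, Function.comp_apply, hinv x₀] at hconst
    linear_combination hconst / 2
  have := hneg x₀
  rw [hzero, Complex.exp_zero] at this
  norm_num at this

/- Glue `exp ∘ φ` on `s` to the constant `1` on `t`. A logarithm of the result differs from `φ` by a
constant on `s` and is constant on `t`. -/
theorem eq_of_exp_eq_one_on_inter [SimplyConnectedSpace X] [LocallyPathConnectedSpace X]
    {s t : Set X} (hs : IsClosed s) (ht : IsClosed t) (hs' : IsPreconnected s)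
    (ht' : IsPreconnected t) (hst : s ∪ t = univ) {φ : X → ℂ} (hφ : Continuous φ)
    (hexp : ∀ x ∈ s ∩ t, Complex.exp (φ x) = 1) {x y : X} (hx : x ∈ s ∩ t) (hy : y ∈ s ∩ t) :
    φ x = φ y := by
  classical
  let g : X → ℂ := s.piecewise (fun x => Complex.exp (φ x)) 1
  have hgs : EqOn g (fun x => Complex.exp (φ x)) s := fun z hz => piecewise_eq_of_mem _ _ _ hz
  have hgt : EqOn g 1 t := fun z hz => by
    by_cases hzs : z ∈ s
    · exact (hgs hzs).trans (hexp z ⟨hzs, hz⟩)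
    · exact piecewise_eq_of_notMem _ _ _ hzs
  have hg : Continuous g := by
    rw [← continuousOn_univ, ← hst]
    exact (hφ.cexp.continuousOn.congr hgs).union_of_isClosed (continuousOn_const.congr hgt) hs ht
  obtain ⟨θ, hθ, hθg⟩ := exists_continuous_exp_eq hg fun z => by
    by_cases hz : z ∈ s <;> simp [g, hz, Complex.exp_ne_zero]
  have hθs : θ x - φ x = θ y - φ y := eq_of_exp_eq_const (c := 1) hs' (hθ.sub hφ).continuousOn
    (fun z hz => by simp [Complex.exp_sub, hθg, hgs hz, Complex.exp_ne_zero]) hx.1 hy.1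
  have hθt : θ x = θ y := eq_of_exp_eq_const (c := 1) ht' hθ.continuousOn
    (fun z hz => by simp [hθg, hgt hz]) hx.2 hy.2
  linear_combination hθt - hθs

theorem isPreconnected_inter_of_union_eq_univ [SimplyConnectedSpace X]
    [LocallyPathConnectedSpace X] [NormalSpace X] {s t : Set X} (hs : IsClosed s)
    (ht : IsClosed t) (hs' : IsPreconnected s) (ht' : IsPreconnected t) (hst : s ∪ t = univ) :
    IsPreconnected (s ∩ t) := by
  rw [isPreconnected_closed_iff]
  rintro a b ha hb hab ⟨m, hm, hma⟩ ⟨n, hn, hnb⟩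
  by_contra hne
  have hdisj : Disjoint (s ∩ t ∩ a) (s ∩ t ∩ b) :=
    disjoint_left.2 fun x hx hx' => hne ⟨x, hx.1, hx.2, hx'.2⟩
  obtain ⟨k, hk₀, hk₁, -⟩ := exists_continuous_zero_one_of_isClosed ((hs.inter ht).inter ha)
    ((hs.inter ht).inter hb) hdisj
  have hexp : ∀ x ∈ s ∩ t, Complex.exp (k x * (2 * Real.pi * Complex.I)) = 1 := by
    intro x hx
    rcases hab hx with hxa | hxb
    · simp [show k x = 0 from hk₀ ⟨hx, hxa⟩]
    · simp [show k x = 1 from hk₁ ⟨hx, hxb⟩]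
  have := eq_of_exp_eq_one_on_inter hs ht hs' ht' hst (by fun_prop) hexp hm hn
  simp [show k m = 0 from hk₀ ⟨hm, hma⟩, show k n = 1 from hk₁ ⟨hn, hnb⟩] at this

theorem isPreconnected_setOf_nonneg_of_comp_eq_neg [PreconnectedSpace X] {τ : X → X}
    (hτ : Continuous τ) {h : X → ℝ} (hh : Continuous h) (hodd : ∀ x, h (τ x) = -h x)
    (hfix : ∀ x, h x = 0 → τ x = x) : IsPreconnected {x | 0 ≤ h x} := by
  let fold (x : X) : X := if 0 ≤ h x then x else τ x
  have hfold : Continuous fold :=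
    continuous_id.if_le hτ continuous_const hh fun x hx => (hfix x hx.symm).symm
  have hrange : range fold = {x | 0 ≤ h x} := by
    refine Subset.antisymm ?_ fun x hx => ⟨x, if_pos hx⟩
    rintro _ ⟨x, rfl⟩
    by_cases hx : 0 ≤ h x
    · simp [fold, hx]
    · simpa [fold, hx, hodd] using (not_le.1 hx).le
  exact hrange ▸ isPreconnected_range hfold

theorem isPreconnected_setOf_eq_zero_of_comp_eq_neg [SimplyConnectedSpace X]
    [LocallyPathConnectedSpace X] [NormalSpace X] {τ : X → X} (hτ : Continuous τ) {h : X → ℝ}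
    (hh : Continuous h) (hodd : ∀ x, h (τ x) = -h x) (hfix : ∀ x, h x = 0 → τ x = x) :
    IsPreconnected {x | h x = 0} := by
  have hnonneg : IsPreconnected {x | 0 ≤ h x} :=
    isPreconnected_setOf_nonneg_of_comp_eq_neg hτ hh hodd hfix
  have hnonpos : IsPreconnected {x | 0 ≤ -h x} :=
    isPreconnected_setOf_nonneg_of_comp_eq_neg hτ hh.neg (fun x => by rw [hodd]) fun x hx =>
      hfix x (neg_eq_zero.1 hx)
  convert isPreconnected_inter_of_union_eq_univ (isClosed_le continuous_const hh)
    (isClosed_le continuous_const hh.neg) hnonneg hnonpos ?_ using 1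
  · ext x
    exact ⟨fun hx => ⟨hx.ge, neg_nonneg.2 hx.le⟩, fun hx => (neg_nonneg.1 hx.2).antisymm hx.1⟩
  · exact eq_univ_of_forall fun x => (le_total 0 (h x)).imp id neg_nonneg.2

theorem isPreconnected_of_subset_closure {s t : Set X} (ht : IsPreconnected t)
    (hst : s ⊆ t) (hts : t ⊆ closure s) (hloc : ∀ x ∈ t, ∃ U ∈ 𝓝 x, IsPreconnected (U ∩ s)) :
    IsPreconnected s := by
  rintro u v hu hv huv ⟨x, hxs, hxu⟩ ⟨y, hys, hyv⟩
  have hcover : t ⊆ closure (s ∩ u) ∪ closure (s ∩ v) := by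
    rwa [← closure_union, ← inter_union_distrib_left, inter_eq_left.2 huv]
  obtain ⟨z, hzt, hzu, hzv⟩ := isPreconnected_closed_iff.1 ht _ _ isClosed_closure isClosed_closure
    hcover ⟨x, hst hxs, subset_closure ⟨hxs, hxu⟩⟩ ⟨y, hst hys, subset_closure ⟨hys, hyv⟩⟩
  obtain ⟨U, hU, hUs⟩ := hloc z hzt
  obtain ⟨x', hx'U, hx's, hx'u⟩ := mem_closure_iff_nhds.1 hzu U hU
  obtain ⟨y', hy'U, hy's, hy'v⟩ := mem_closure_iff_nhds.1 hzv U hU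
  obtain ⟨w, hw, hwuv⟩ := hUs u v hu hv (inter_subset_right.trans huv) ⟨x', ⟨hx'U, hx's⟩, hx'u⟩
    ⟨y', ⟨hy'U, hy's⟩, hy'v⟩
  exact ⟨w, hw.2, hwuv⟩

theorem eq_of_subset_of_mem_nhdsWithin {s t : Set X} (ht : IsPreconnected t) (hst : s ⊆ t)
    (hs : s.Nonempty) (hopen : ∀ x ∈ s, s ∈ 𝓝[t] x) (hclosed : ∀ x ∈ t \ s, sᶜ ∈ 𝓝[t] x) :
    s = t := by
  have := Subtype.preconnectedSpace ht
  obtain ⟨x, hx⟩ := hs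
  have hclopen : IsClopen (Subtype.val ⁻¹' s : Set t) :=
    ⟨⟨isOpen_iff_mem_nhds.2 fun y hy =>
        preimage_coe_mem_nhds_subtype.2 (hclosed y ⟨y.2, hy⟩)⟩,
      isOpen_iff_mem_nhds.2 fun y hy => preimage_coe_mem_nhds_subtype.2 (hopen y hy)⟩
  have huniv := hclopen.eq_univ ⟨⟨x, hst hx⟩, hx⟩
  exact hst.antisymm fun y hy => (huniv ▸ mem_univ (⟨y, hy⟩ : t) : _ ∈ Subtype.val ⁻¹' s)

theorem closure_setOf_fixed_inter_subset [T2Space X] {τ : X → X} {D : Set X}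
    (hτ : ContinuousOn τ D) : closure {p ∈ D | τ p = p} ∩ D ⊆ {p ∈ D | τ p = p} := by
  rintro p ⟨hp, hpD⟩
  have := mem_closure_iff_nhdsWithin_neBot.1 hp
  have hlim : Tendsto τ (𝓝[{p ∈ D | τ p = p}] p) (𝓝 p) :=
    (tendsto_nhdsWithin_of_tendsto_nhds tendsto_id).congr'
      (eventually_mem_nhdsWithin.mono fun q hq => hq.2.symm)
  exact ⟨hpD, tendsto_nhds_unique ((hτ p hpD).mono (sep_subset _ _)) hlim⟩

theorem isEmbedding_of_image_mem_nhdsWithin_range {f : X → Y} (hf : Continuous f)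
    (hinj : Function.Injective f) (h : ∀ x, ∀ W ∈ 𝓝 x, f '' W ∈ 𝓝[range f] f x) :
    Topology.IsEmbedding f := by
  refine ⟨Topology.isInducing_iff_nhds.2 fun x => le_antisymm (hf.tendsto x).le_comap ?_, hinj⟩
  intro W hW
  obtain ⟨V, hV, hVW⟩ := mem_nhdsWithin_iff_exists_mem_nhds_inter.1 (h x W hW)
  refine ⟨V, hV, fun y hy => ?_⟩
  obtain ⟨z, hz, hzy⟩ := hVW ⟨hy, mem_range_self y⟩
  exact hinj hzy ▸ hz

end Topology

section Ball

variable {E : Type*} [NormedAddCommGroup E] [NormedSpace ℝ E]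

theorem isPreconnected_setOf_norm_mem_Ioo (hE : 1 < Module.rank ℝ E) {r R : ℝ} (hr : 0 ≤ r) :
    IsPreconnected {x : E | ‖x‖ ∈ Ioo r R} := by
  have himage : {x : E | ‖x‖ ∈ Ioo r R} =
      (fun y : ℝ × E => y.1 • y.2) '' (Ioo r R ×ˢ sphere 0 1) := by
    ext x
    constructor
    · intro hx
      have hx₀ : ‖x‖ ≠ 0 := (hr.trans_lt hx.1).ne'
      exact ⟨(‖x‖, ‖x‖⁻¹ • x), ⟨hx, by simp [norm_smul, hx₀]⟩, by simp [smul_smul, hx₀]⟩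
    · rintro ⟨⟨t, y⟩, ⟨ht, hy⟩, rfl⟩
      simpa [norm_smul, mem_sphere_zero_iff_norm.1 hy, abs_of_pos (hr.trans_lt ht.1)] using ht
  rw [himage]
  exact (isPreconnected_Ioo.prod (isPreconnected_sphere hE 0 1)).image _ (by fun_prop)

theorem not_isCompact_ball [Nontrivial E] (x : E) {R : ℝ} (hR : 0 < R) :
    ¬IsCompact (ball x R) := by
  intro h
  obtain ⟨y, hy⟩ := (NormedSpace.sphere_nonempty (x := x)).2 hR.le
  have hy' : y ∈ closure (ball x R) := by
    rw [closure_ball x hR.ne']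
    exact sphere_subset_closedBall hy
  exact (mem_ball.1 (h.isClosed.closure_eq ▸ hy')).ne (mem_sphere.1 hy)

/- Otherwise the zeros lie in a closed ball `K` of smaller radius, and `h` has constant sign on the
annulus outside `K`. Since `h` is odd, no orbit of `τ` stays in the annulus, hence the whole
open ball is the compact set `K ∪ τ '' K`. -/
theorem not_isCompact_setOf_eq_zero_of_comp_eq_neg [ProperSpace E] (hE : 1 < Module.rank ℝ E)
    {R : ℝ} (hR : 0 < R) {τ : E → E} (hτ : ContinuousOn τ (ball 0 R))
    (hmaps : MapsTo τ (ball 0 R) (ball 0 R)) (hinv : ∀ p ∈ ball (0 : E) R, τ (τ p) = p)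
    {h : E → ℝ} (hh : ContinuousOn h (ball 0 R)) (hodd : ∀ p ∈ ball (0 : E) R, h (τ p) = -h p) :
    ¬IsCompact {p ∈ ball (0 : E) R | h p = 0} := by
  intro hF
  have : Nontrivial E := (rank_pos_iff_nontrivial (R := ℝ)).1 (zero_lt_one.trans hE)
  obtain ⟨r, hr₀, hrR, hFr⟩ : ∃ r, 0 ≤ r ∧ r < R ∧ ∀ p ∈ ball (0 : E) R, h p = 0 → ‖p‖ ≤ r := by
    obtain ⟨r, hr, hFr⟩ := exists_lt_subset_ball hF.isClosed fun p hp => hp.1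
    exact ⟨max r 0, le_max_right _ _, max_lt hr hR, fun p hp hp' =>
      le_max_of_le_left (mem_ball_zero_iff.1 (hFr ⟨hp, hp'⟩)).le⟩
  have hannulus : {x : E | ‖x‖ ∈ Ioo r R} ⊆ ball 0 R := fun x hx => mem_ball_zero_iff.2 hx.2
  have hsign : ∀ p ∈ ball (0 : E) R, ¬(‖p‖ ∈ Ioo r R ∧ ‖τ p‖ ∈ Ioo r R) := by
    rintro p hp ⟨hp', hτp'⟩
    have hmem : (0 : ℝ) ∈ uIcc (h p) (h (τ p)) := by
      rw [hodd p hp, mem_uIcc]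
      rcases le_total 0 (h p) with hle | hle <;> [right; left] <;> constructor <;> linarith
    obtain ⟨z, hz, hz₀⟩ := (((isPreconnected_setOf_norm_mem_Ioo hE hr₀).image h
      (hh.mono hannulus)).ordConnected.uIcc_subset (mem_image_of_mem h hp')
        (mem_image_of_mem h hτp')) hmem
    exact (hFr z (hannulus hz) hz₀).not_gt hz.1
  have hK : closedBall (0 : E) r ⊆ ball 0 R := closedBall_subset_ball hrR
  have hball : ball (0 : E) R = closedBall 0 r ∪ τ '' closedBall 0 r := by
    refine Subset.antisymm (fun p hp => ?_) (union_subset hK (hmaps.mono_left hK).image_subset)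
    by_contra hp'
    rw [mem_union, not_or] at hp'
    refine hsign p hp ⟨⟨by simpa using hp'.1, mem_ball_zero_iff.1 hp⟩, ⟨?_,
      mem_ball_zero_iff.1 (hmaps hp)⟩⟩
    by_contra! hle
    exact hp'.2 ⟨τ p, mem_closedBall_zero_iff.2 hle, hinv p hp⟩
  refine not_isCompact_ball (0 : E) hR (hball ▸ ?_)
  exact (isCompact_closedBall 0 r).union
    ((isCompact_closedBall 0 r).image_of_continuousOn (hτ.mono hK))

end Ball

section LinearAlgebra

open ComplexConjugate

theorem det_eq_im_conj_mul (L : ℂ →L[ℝ] ℂ) {n : ℂ} (hn : ‖n‖ = 1) :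
    L.det = (conj (L n) * L (Complex.I * n)).im := by
  have hL (z : ℂ) : L z = z.re • L 1 + z.im • L Complex.I := by
    rw [← map_smul, ← map_smul, ← map_add]
    congr 1
    apply Complex.ext <;> simp
  have hdet : L.det = (L 1).re * (L Complex.I).im - (L Complex.I).re * (L 1).im := by
    rw [ContinuousLinearMap.det, ← LinearMap.det_toMatrix Complex.basisOneI, Matrix.det_fin_two]
    simp [LinearMap.toMatrix_apply]
  have hn' : n.re ^ 2 + n.im ^ 2 = 1 := by
    rw [← Complex.sq_norm_sub_sq_im, hn]
    ring
  rw [hL n, hL (Complex.I * n), hdet]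
  simp only [Complex.real_smul, map_add, map_mul, Complex.conj_ofReal, Complex.mul_re,
    Complex.I_re, zero_mul, Complex.I_im, one_mul, zero_sub, neg_smul, Complex.mul_im, zero_add,
    Complex.add_re, Complex.ofReal_re, Complex.conj_re, Complex.ofReal_im, Complex.conj_im, mul_neg,
    neg_zero, sub_zero, Complex.add_im, Complex.neg_im, add_zero, Complex.neg_re]
  linear_combination (-((L 1).re * (L Complex.I).im - (L Complex.I).re * (L 1).im)) * hn'

theorem one_le_norm_I_mul_add (L : ℂ →L[ℝ] ℂ) {n : ℂ} (hn : ‖n‖ = 1) (hLn : L n = -n)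
    (hdet : L.det < 0) : 1 ≤ ‖Complex.I * n + L (Complex.I * n)‖ := by
  have hinner : inner ℝ (Complex.I * n) (Complex.I * n + L (Complex.I * n)) = 1 - L.det := by
    rw [det_eq_im_conj_mul L hn, hLn, inner_add_right, real_inner_self_eq_norm_sq, norm_mul, hn]
    simp only [Complex.norm_I, mul_one, one_pow, Complex.inner, map_mul, Complex.conj_I, neg_mul,
      mul_neg, Complex.neg_re, Complex.mul_re, Complex.I_re, Complex.conj_re, zero_mul,
      Complex.I_im, Complex.conj_im, one_mul, sub_neg_eq_add, zero_add, Complex.mul_im, neg_zero,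
      neg_sub, map_neg, Complex.neg_im, neg_add_rev, neg_neg]
    ring
  calc 1 ≤ 1 - L.det := by linarith
    _ = inner ℝ (Complex.I * n) (Complex.I * n + L (Complex.I * n)) := hinner.symm
    _ ≤ ‖Complex.I * n‖ * ‖Complex.I * n + L (Complex.I * n)‖ := real_inner_le_norm _ _
    _ = ‖Complex.I * n + L (Complex.I * n)‖ := by simp [hn]

theorem norm_sq_sub_sq_le (L : ℂ →L[ℝ] ℂ) {n u : ℂ} (hn : ‖n‖ = 1) (hu : ‖u‖ = 1)
    (hLn : L n = -n) (hdet : L.det < 0) : ‖u ^ 2 - n ^ 2‖ ≤ 2 * ‖u + L u‖ := by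
  obtain ⟨w, rfl⟩ : ∃ w, u = n * w :=
    ⟨u / n, (mul_div_cancel₀ u (norm_ne_zero_iff.1 (by simp [hn]))).symm⟩
  have hw : ‖w‖ = 1 := by simpa [hn] using hu
  have hw' : w.re ^ 2 + w.im ^ 2 = 1 := by
    rw [← Complex.sq_norm_sub_sq_im, hw]
    ring
  have hsplit : n * w = w.re • n + w.im • (Complex.I * n) := by
    nth_rw 1 [← Complex.re_add_im w]
    simp only [Complex.real_smul]
    ring
  have hnorm : ‖n * w + L (n * w)‖ = |w.im| * ‖Complex.I * n + L (Complex.I * n)‖ := by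
    rw [← Real.norm_eq_abs, ← norm_smul, hsplit, map_add, map_smul, map_smul, hLn]
    congr 1
    module
  have hsq : (n * w) ^ 2 - n ^ 2 = n ^ 2 * (2 * w.im * Complex.I * w) := by
    have : w ^ 2 - 1 = 2 * w.im * Complex.I * w := by
      apply Complex.ext <;> simp [sq] <;> linarith
    linear_combination n ^ 2 * this
  calc ‖(n * w) ^ 2 - n ^ 2‖ = 2 * |w.im| := by simp [hsq, hn, hw]
    _ ≤ 2 * (|w.im| * ‖Complex.I * n + L (Complex.I * n)‖) := by
      gcongr
      exact le_mul_of_one_le_right (abs_nonneg _) (one_le_norm_I_mul_add L hn hLn hdet)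
    _ = 2 * ‖n * w + L (n * w)‖ := by rw [hnorm]

end LinearAlgebra

section Derivative

variable {E : Type*} [NormedAddCommGroup E] [NormedSpace ℝ E]

theorem exists_norm_eq_one_map_eq_neg {L : E →L[ℝ] E} (hL : ∀ z, L (L z) = z)
    (hdet : L.det < 0) : ∃ n, ‖n‖ = 1 ∧ L n = -n := by
  obtain ⟨z, hz⟩ : ∃ z, L z ≠ z := by
    by_contra! h
    have : L = ContinuousLinearMap.id ℝ E := ContinuousLinearMap.ext h
    norm_num [this, ContinuousLinearMap.det] at hdet
  refine ⟨‖z - L z‖⁻¹ • (z - L z), ?_, ?_⟩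
  · rw [norm_smul, norm_inv, norm_norm, inv_mul_cancel₀]
    exact norm_ne_zero_iff.2 (sub_ne_zero.2 hz.symm)
  · rw [map_smul, map_sub, hL, ← smul_neg, neg_sub]

theorem fderiv_fderiv_apply_of_eventually_involutive {τ : E → E} {p : E}
    (hτ : DifferentiableAt ℝ τ p) (hp : τ p = p) (hinv : ∀ᶠ q in 𝓝 p, τ (τ q) = q) (z : E) :
    fderiv ℝ τ p (fderiv ℝ τ p z) = z := by
  have hcomp : HasFDerivAt (τ ∘ τ) (fderiv ℝ τ p ∘L fderiv ℝ τ p) p :=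
    HasFDerivAt.comp p (hp.symm ▸ hτ.hasFDerivAt) hτ.hasFDerivAt
  exact DFunLike.congr_fun (hcomp.unique ((hasFDerivAt_id p).congr_of_eventuallyEq hinv)) z

end Derivative

section NormalField

variable {E : Type*} [NormedAddCommGroup E] [NormedSpace ℝ E]

/-- `τ` restricts to an orientation-reversing `C¹` involution of `D`. Smoothness of the inverse is
automatic, since the inverse is `τ` itself. -/
structure IsReversingInvolution (τ : E → E) (D : Set E) : Prop where
  contDiffOn : ContDiffOn ℝ 1 τ D
  mapsTo : MapsTo τ D D
  involutive : ∀ p ∈ D, τ (τ p) = p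
  det_neg : ∀ p ∈ D, (fderiv ℝ τ p).det < 0

/-- A unit vector field on `D` which spans the line through `p` and `τ p` when these points are
distinct, and is reversed by the derivative of `τ` at fixed points. It is not required to be
continuous; at fixed points it will turn out to be normal to the fixed-point set. -/
structure IsNormalField (τ : E → E) (D : Set E) (u : E → E) : Prop where
  norm_eq : ∀ p ∈ D, ‖u p‖ = 1
  exists_sub_eq_smul : ∀ p ∈ D, ∃ t : ℝ, p - τ p = t • u p
  fderiv_apply : ∀ p ∈ D, τ p = p → fderiv ℝ τ p (u p) = -u p

variable {τ : E → E} {D : Set E} {u : E → E}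

theorem IsReversingInvolution.hasStrictFDerivAt (hτ : IsReversingInvolution τ D) (hD : IsOpen D)
    {p : E} (hp : p ∈ D) : HasStrictFDerivAt τ (fderiv ℝ τ p) p :=
  (hτ.contDiffOn.contDiffAt (hD.mem_nhds hp)).hasStrictFDerivAt one_ne_zero

theorem IsReversingInvolution.continuousOn_fderiv (hτ : IsReversingInvolution τ D)
    (hD : IsOpen D) : ContinuousOn (fderiv ℝ τ) D :=
  hτ.contDiffOn.continuousOn_fderiv_of_isOpen hD le_rfl

theorem IsReversingInvolution.fderiv_fderiv_apply (hτ : IsReversingInvolution τ D)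
    (hD : IsOpen D) {p : E} (hp : p ∈ D) (hfix : τ p = p) (z : E) :
    fderiv ℝ τ p (fderiv ℝ τ p z) = z :=
  fderiv_fderiv_apply_of_eventually_involutive (hτ.hasStrictFDerivAt hD hp).differentiableAt hfix
    ((hD.eventually_mem hp).mono hτ.involutive) z

theorem IsReversingInvolution.exists_isNormalField (hτ : IsReversingInvolution τ D)
    (hD : IsOpen D) : ∃ u, IsNormalField τ D u := by
  have hpoint (p : E) : ∃ n : E, p ∈ D → ‖n‖ = 1 ∧ (∃ t : ℝ, p - τ p = t • n) ∧
      (τ p = p → fderiv ℝ τ p n = -n) := by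
    by_cases hp : p ∈ D; swap
    · exact ⟨0, fun h => absurd h hp⟩
    by_cases hfix : τ p = p
    · obtain ⟨n, hn, hLn⟩ := exists_norm_eq_one_map_eq_neg (hτ.fderiv_fderiv_apply hD hp hfix)
        (hτ.det_neg p hp)
      exact ⟨n, fun _ => ⟨hn, ⟨0, by simp [hfix]⟩, fun _ => hLn⟩⟩
    · have hne : ‖p - τ p‖ ≠ 0 := norm_ne_zero_iff.2 (sub_ne_zero.2 (Ne.symm hfix))
      exact ⟨‖p - τ p‖⁻¹ • (p - τ p), fun _ => ⟨by simp [norm_smul, hne],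
        ⟨‖p - τ p‖, by simp [smul_smul, hne]⟩, fun h => absurd h hfix⟩⟩
  choose u hu using hpoint
  exact ⟨u, fun p hp => (hu p hp).1, fun p hp => (hu p hp).2.1, fun p hp => (hu p hp).2.2⟩

theorem IsNormalField.comp_involution (hu : IsNormalField τ D u)
    (hτ : IsReversingInvolution τ D) : IsNormalField τ D (u ∘ τ) where
  norm_eq p hp := hu.norm_eq _ (hτ.mapsTo hp)
  exists_sub_eq_smul p hp := by
    obtain ⟨t, ht⟩ := hu.exists_sub_eq_smul _ (hτ.mapsTo hp)
    rw [hτ.involutive p hp] at ht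
    exact ⟨-t, by rw [Function.comp_apply, neg_smul, ← ht, neg_sub]⟩
  fderiv_apply p hp hfix := by simpa [hfix] using hu.fderiv_apply p hp hfix

/- Off the fixed-point set `u q` is parallel to `q - τ q`, and the claim is strict
differentiability of `τ` at `p` along `(q, τ q)`. -/
theorem IsNormalField.tendsto_add_fderiv (hu : IsNormalField τ D u)
    (hτ : IsReversingInvolution τ D) (hD : IsOpen D) {p : E} (hp : p ∈ D) (hfix : τ p = p) :
    Tendsto (fun q => u q + fderiv ℝ τ p (u q)) (𝓝 p) (𝓝 0) := by
  refine NormedAddGroup.tendsto_nhds_zero.2 fun ε hε => ?_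
  have hstrict := hτ.hasStrictFDerivAt hD hp
  have hpair : Tendsto (fun q => (q, τ q)) (𝓝 p) (𝓝 (p, p)) := by
    simpa [ContinuousAt, hfix] using continuousAt_id.prodMk hstrict.continuousAt
  have hderiv : ∀ᶠ q in 𝓝 p, ‖fderiv ℝ τ p - fderiv ℝ τ q‖ < ε := by
    have := (hτ.continuousOn_fderiv hD).continuousAt (hD.mem_nhds hp)
    simpa [dist_eq_norm, norm_sub_rev] using Metric.continuousAt_iff'.1 this ε hε
  filter_upwards [hpair.eventually (hstrict.isLittleO.def (half_pos hε)), hderiv, hD.mem_nhds hp]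
    with q hq hq' hqD
  by_cases hqfix : τ q = q
  · calc ‖u q + fderiv ℝ τ p (u q)‖ = ‖(fderiv ℝ τ p - fderiv ℝ τ q) (u q)‖ := by
          rw [sub_apply, hu.fderiv_apply q hqD hqfix, sub_neg_eq_add, add_comm]
      _ ≤ ‖fderiv ℝ τ p - fderiv ℝ τ q‖ * ‖u q‖ := ContinuousLinearMap.le_opNorm _ _
      _ < ε := by rwa [hu.norm_eq q hqD, mul_one]
  · obtain ⟨t, ht⟩ := hu.exists_sub_eq_smul q hqD
    have ht₀ : 0 < ‖t‖ := norm_pos_iff.2 fun h => hqfix (by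
      rw [h, zero_smul, sub_eq_zero] at ht
      exact ht.symm)
    have hsmul : τ q - q - fderiv ℝ τ p (t • u q) = -(t • (u q + fderiv ℝ τ p (u q))) := by
      rw [← neg_sub q, ht, map_smul, smul_add]
      abel
    simp only [hτ.involutive q hqD, ht, hsmul, norm_neg, norm_smul, hu.norm_eq q hqD, mul_one]
      at hq
    have := le_of_mul_le_mul_left (hq.trans_eq (mul_comm _ _)) ht₀
    linarith

end NormalField

section Plane

variable {τ : ℂ → ℂ} {D : Set ℂ} {u v : ℂ → ℂ}

theorem IsNormalField.sq_eq_of_ne (hu : IsNormalField τ D u) {p : ℂ} (hp : p ∈ D)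
    (hfix : τ p ≠ p) : u p ^ 2 = (p - τ p) ^ 2 / (‖p - τ p‖ : ℂ) ^ 2 := by
  obtain ⟨t, ht⟩ := hu.exists_sub_eq_smul p hp
  have ht₀ : t ≠ 0 := fun h => hfix (sub_eq_zero.1 (by simpa [h] using ht)).symm
  rw [ht, norm_smul, hu.norm_eq p hp, mul_one, ← Complex.ofReal_pow, Real.norm_eq_abs, sq_abs,
    Complex.real_smul, Complex.ofReal_pow, mul_pow,
    mul_div_cancel_left₀ _ (pow_ne_zero 2 (Complex.ofReal_ne_zero.2 ht₀))]

theorem IsNormalField.norm_sq_sub_sq_le (hu : IsNormalField τ D u)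
    (hv : IsNormalField τ D v) (hτ : IsReversingInvolution τ D) {p q : ℂ} (hp : p ∈ D)
    (hfix : τ p = p) (hq : q ∈ D) :
    ‖u q ^ 2 - v p ^ 2‖ ≤ 2 * ‖u q + fderiv ℝ τ p (u q)‖ :=
  ReversingInvolution.norm_sq_sub_sq_le _ (hv.norm_eq p hp) (hu.norm_eq q hq)
    (hv.fderiv_apply p hp hfix) (hτ.det_neg p hp)

theorem IsNormalField.sq_eq_sq (hu : IsNormalField τ D u) (hv : IsNormalField τ D v)
    (hτ : IsReversingInvolution τ D) {p : ℂ} (hp : p ∈ D) : u p ^ 2 = v p ^ 2 := by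
  by_cases hfix : τ p = p
  · have := hu.norm_sq_sub_sq_le hv hτ hp hfix hp
    rw [hu.fderiv_apply p hp hfix, add_neg_cancel, norm_zero, mul_zero] at this
    exact sub_eq_zero.1 (norm_le_zero_iff.1 this)
  · rw [hu.sq_eq_of_ne hp hfix, hv.sq_eq_of_ne hp hfix]

theorem IsNormalField.continuousOn_sq (hu : IsNormalField τ D u)
    (hτ : IsReversingInvolution τ D) (hD : IsOpen D) : ContinuousOn (u ^ 2) D := by
  intro p hp
  have hτp : ContinuousAt τ p := (hτ.hasStrictFDerivAt hD hp).continuousAt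
  refine ContinuousAt.continuousWithinAt ?_
  by_cases hfix : τ p = p
  · rw [ContinuousAt, tendsto_iff_norm_sub_tendsto_zero]
    refine squeeze_zero' (Eventually.of_forall fun q => norm_nonneg _)
      ((hD.eventually_mem hp).mono fun q hq => hu.norm_sq_sub_sq_le hu hτ hp hfix hq) ?_
    simpa using (hu.tendsto_add_fderiv hτ hD hp hfix).norm.const_mul 2
  · have hsq : u ^ 2 =ᶠ[𝓝 p] fun q => (q - τ q) ^ 2 / (‖q - τ q‖ : ℂ) ^ 2 := by
      filter_upwards [hD.mem_nhds hp, (hτp.ne_iff_eventually_ne continuousAt_id).1 hfix]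
        with q hq hq'
      exact hu.sq_eq_of_ne hq hq'
    have hne : (‖p - τ p‖ : ℂ) ^ 2 ≠ 0 := by simpa [sub_eq_zero] using Ne.symm hfix
    exact ContinuousAt.congr (by fun_prop (disch := exact hne)) hsq.symm

theorem IsNormalField.of_sq_eq_sq (hu : IsNormalField τ D u) (h : ∀ p, v p ^ 2 = u p ^ 2) :
    IsNormalField τ D v where
  norm_eq p hp := by
    rcases sq_eq_sq_iff_eq_or_eq_neg.1 (h p) with hvu | hvu <;> simp [hvu, hu.norm_eq p hp]
  exists_sub_eq_smul p hp := by
    obtain ⟨t, ht⟩ := hu.exists_sub_eq_smul p hp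
    rcases sq_eq_sq_iff_eq_or_eq_neg.1 (h p) with hvu | hvu
    · exact ⟨t, hvu ▸ ht⟩
    · exact ⟨-t, by simp [hvu, ht]⟩
  fderiv_apply p hp hfix := by
    rcases sq_eq_sq_iff_eq_or_eq_neg.1 (h p) with hvu | hvu <;>
      simp [hvu, hu.fderiv_apply p hp hfix]

theorem IsReversingInvolution.exists_fixedPoint (hτ : IsReversingInvolution τ D) (hD : IsOpen D)
    (hDsc : IsSimplyConnected D) : ∃ p ∈ D, τ p = p := by
  have := hDsc.simplyConnectedSpace
  have := hD.locallyPathConnectedSpace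
  obtain ⟨p, hp⟩ := exists_fixedPoint_of_involutive continuous_subtype_val
    Subtype.val_injective (hτ.contDiffOn.continuousOn.mapsToRestrict hτ.mapsTo)
    fun p => Subtype.ext (hτ.involutive p p.2)
  exact ⟨p, p.2, congrArg Subtype.val hp⟩

theorem IsReversingInvolution.exists_continuousOn_isNormalField
    (hτ : IsReversingInvolution τ D) (hD : IsOpen D) (hDsc : IsSimplyConnected D) :
    ∃ v, IsNormalField τ D v ∧ ContinuousOn v D ∧ EqOn (v ∘ τ) v D := by
  obtain ⟨u, hu⟩ := hτ.exists_isNormalField hD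
  obtain ⟨v, hv, hvu⟩ := Complex.exists_continuousOn_pow_eq hDsc hD (hu.continuousOn_sq hτ hD)
    (by
      rintro ⟨p, hp, hp₀⟩
      have := hu.norm_eq p hp
      simp_all) two_ne_zero
  have hvn : IsNormalField τ D v := hu.of_sq_eq_sq hvu
  obtain ⟨p, hp, hfix⟩ := hτ.exists_fixedPoint hD hDsc
  refine ⟨v, hvn, hv, hDsc.isPathConnected.isConnected.isPreconnected.eq_of_sq_eq
    (hv.comp hτ.contDiffOn.continuousOn hτ.mapsTo) hv
    (fun q hq => (hvn.comp_involution hτ).sq_eq_sq hvn hτ hq) (fun {q} hq h => ?_) hp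
    (by simp [hfix])⟩
  simpa [h] using hvn.norm_eq q hq

end Plane

section Height

variable {E : Type*} [NormedAddCommGroup E] [InnerProductSpace ℝ E] {τ : E → E} {D : Set E}
  {v : E → E}

/-- The component of the displacement `q - τ q` along a fixed vector `n`. If `n` is the normal at a
fixed point `p`, this is a `C¹` equation of the fixed-point set near `p`. -/
noncomputable def displacement (τ : E → E) (n q : E) : ℝ :=
  inner ℝ n (q - τ q)

/-- The signed length of the displacement `p - τ p` along a normal field `v`. Unlike `displacement`,
it is defined consistently on the whole domain, but it is only as regular as `v`. -/
noncomputable def height (τ v : E → E) (p : E) : ℝ :=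
  displacement τ (v p) p

theorem IsNormalField.sub_eq_height_smul (hv : IsNormalField τ D v) {p : E} (hp : p ∈ D) :
    p - τ p = height τ v p • v p := by
  obtain ⟨t, ht⟩ := hv.exists_sub_eq_smul p hp
  rw [height, displacement, ht, real_inner_smul_right, real_inner_self_eq_norm_sq, hv.norm_eq p hp,
    one_pow, mul_one]

theorem IsNormalField.height_eq_zero_iff (hv : IsNormalField τ D v) {p : E} (hp : p ∈ D) :
    height τ v p = 0 ↔ τ p = p := by
  refine ⟨fun h => ?_, fun h => by simp [height, displacement, h]⟩
  have := hv.sub_eq_height_smul hp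
  rw [h, zero_smul, sub_eq_zero] at this
  exact this.symm

theorem IsReversingInvolution.height_apply (hτ : IsReversingInvolution τ D)
    (hvτ : EqOn (v ∘ τ) v D) {p : E} (hp : p ∈ D) : height τ v (τ p) = -height τ v p := by
  rw [height, height, displacement, displacement, hτ.involutive p hp, ← neg_sub, inner_neg_right,
    show v (τ p) = v p from hvτ hp]

theorem IsReversingInvolution.continuousOn_height (hτ : IsReversingInvolution τ D)
    (hv : ContinuousOn v D) : ContinuousOn (height τ v) D :=
  hv.inner (𝕜 := ℝ) (continuousOn_id.sub hτ.contDiffOn.continuousOn)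

theorem IsNormalField.eventually_sign_displacement_eq (hv : IsNormalField τ D v)
    (hD : IsOpen D) (hvc : ContinuousOn v D) {p : E} (hp : p ∈ D) :
    ∀ᶠ q in 𝓝 p, SignType.sign (displacement τ (v p) q) = SignType.sign (height τ v q) := by
  have hpos : ∀ᶠ q in 𝓝 p, 0 < (inner ℝ (v p) (v q) : ℝ) := by
    refine (continuousAt_const.inner (𝕜 := ℝ) (hvc.continuousAt (hD.mem_nhds hp))).eventually
      (lt_mem_nhds ?_)
    simp [hv.norm_eq p hp]
  filter_upwards [hpos, hD.mem_nhds hp] with q hq hqD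
  rw [displacement, hv.sub_eq_height_smul hqD, real_inner_smul_right, sign_mul, sign_pos hq,
    mul_one]

theorem IsReversingInvolution.contDiffAt_displacement (hτ : IsReversingInvolution τ D)
    (hD : IsOpen D) (n : E) {p : E} (hp : p ∈ D) : ContDiffAt ℝ 1 (displacement τ n) p :=
  contDiffAt_const.inner ℝ (contDiffAt_id.sub (hτ.contDiffOn.contDiffAt (hD.mem_nhds hp)))

theorem IsReversingInvolution.fderiv_displacement (hτ : IsReversingInvolution τ D)
    (hD : IsOpen D) (n : E) {p : E} (hp : p ∈ D) (z : E) :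
    fderiv ℝ (displacement τ n) p z = inner ℝ n (z - fderiv ℝ τ p z) := by
  have := (innerSL ℝ n).hasFDerivAt.comp p
    ((hasFDerivAt_id p).sub (hτ.hasStrictFDerivAt hD hp).hasFDerivAt)
  exact DFunLike.congr_fun this.fderiv z

theorem IsReversingInvolution.hasStrictFDerivAt_displacement (hτ : IsReversingInvolution τ D)
    (hD : IsOpen D) (n : E) {p : E} (hp : p ∈ D) :
    HasStrictFDerivAt (displacement τ n) (fderiv ℝ (displacement τ n) p) p :=
  (hτ.contDiffAt_displacement hD n hp).hasStrictFDerivAt one_ne_zero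

theorem IsNormalField.fderiv_displacement_ne_zero (hv : IsNormalField τ D v)
    (hτ : IsReversingInvolution τ D) (hD : IsOpen D) {p : E} (hp : p ∈ D) (hfix : τ p = p) :
    fderiv ℝ (displacement τ (v p)) p ≠ 0 := by
  intro h
  have := hτ.fderiv_displacement hD (v p) hp (v p)
  rw [h, hv.fderiv_apply p hp hfix, sub_neg_eq_add, inner_add_right, real_inner_self_eq_norm_sq,
    hv.norm_eq p hp] at this
  norm_num at this

end Height

section Sides

variable {E : Type*} [NormedAddCommGroup E] [NormedSpace ℝ E] {f : E → ℝ} {f' : E →L[ℝ] ℝ} {p : E}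

theorem mem_closure_setOf_pos_of_hasFDerivAt (hf : HasFDerivAt f f' p) (hf' : f' ≠ 0)
    (hp : f p = 0) {s : Set E} (hs : s ∈ 𝓝 p) : p ∈ closure (s ∩ {q | 0 < f q}) := by
  by_contra h
  refine hf' (IsLocalMax.hasFDerivAt_eq_zero (f := f) (a := p) ?_ hf)
  filter_upwards [isClosed_closure.isOpen_compl.mem_nhds h, hs] with q hq hqs
  exact hp ▸ not_lt.1 fun hlt => hq (subset_closure ⟨hqs, hlt⟩)

theorem exists_mem_nhds_isPreconnected_inter_setOf_pos [CompleteSpace E]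
    (hf : HasStrictFDerivAt f f' p) (hf' : f' ≠ 0) {s : Set E} (hs : s ∈ 𝓝 p) :
    ∃ U ∈ 𝓝 p, U ⊆ s ∧ IsPreconnected (U ∩ {q | 0 < f q}) := by
  have hrange : f'.range = ⊤ := LinearMap.range_eq_top.2 (LinearMap.surjective
    fun h => hf' (ContinuousLinearMap.coe_injective h))
  let Φ := hf.implicitToOpenPartialHomeomorph f f' hrange
  have hpΦ : p ∈ Φ.source := hf.mem_implicitToOpenPartialHomeomorph_source hrange
  obtain ⟨r, hr, hball⟩ := Metric.mem_nhds_iff.1 (inter_mem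
    (Φ.open_target.mem_nhds (Φ.map_source hpΦ))
    ((Φ.continuousAt_symm (Φ.map_source hpΦ)).preimage_mem_nhds (by rwa [Φ.left_inv hpΦ])))
  have himage : Φ.symm '' ball (Φ p) r ∩ {q | 0 < f q} =
      Φ.symm '' (ball (Φ p) r ∩ {y | 0 < y.1}) := by
    rw [← image_inter_preimage]
    congr 1
    ext y
    refine and_congr_right fun hy => ?_
    change 0 < (Φ (Φ.symm y)).1 ↔ 0 < y.1
    rw [Φ.right_inv (hball hy).1]
  refine ⟨Φ.symm '' ball (Φ p) r, ?_, image_subset_iff.2 fun y hy => (hball hy).2, ?_⟩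
  · exact Φ.symm_map_nhds_eq hpΦ ▸ image_mem_map (ball_mem_nhds _ hr)
  · rw [himage]
    exact ((convex_ball _ _).inter (convex_halfSpace_gt (LinearMap.fst ℝ ℝ _).isLinear
      0)).isPreconnected.image _ (Φ.continuousOn_symm.mono fun y hy => (hball hy.1).1)

end Sides

section Components

variable {E : Type*} [NormedAddCommGroup E] [InnerProductSpace ℝ E] {τ : E → E} {D : Set E}
  {v : E → E}

theorem IsReversingInvolution.image_setOf_height_pos (hτ : IsReversingInvolution τ D)
    (hvτ : EqOn (v ∘ τ) v D) :
    τ '' {p ∈ D | 0 < height τ v p} = {p ∈ D | height τ v p < 0} := by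
  ext p
  constructor
  · rintro ⟨q, ⟨hq, hpos⟩, rfl⟩
    exact ⟨hτ.mapsTo hq, by rwa [hτ.height_apply hvτ hq, neg_lt_zero]⟩
  · rintro ⟨hp, hneg⟩
    exact ⟨τ p, ⟨hτ.mapsTo hp, by rwa [hτ.height_apply hvτ hp, neg_pos]⟩, hτ.involutive p hp⟩

theorem IsNormalField.exists_mem_nhds_inter_setOf_displacement_pos_eq
    (hv : IsNormalField τ D v) (hD : IsOpen D) (hvc : ContinuousOn v D) {p : E} (hp : p ∈ D) :
    ∃ N ∈ 𝓝 p, ∀ U ⊆ N,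
      U ∩ {q | 0 < displacement τ (v p) q} = U ∩ {q ∈ D | 0 < height τ v q} := by
  obtain ⟨N, hN, hsign⟩ := ((hv.eventually_sign_displacement_eq hD hvc hp).and
    (hD.eventually_mem hp)).exists_mem
  refine ⟨N, hN, fun U hU => Set.ext fun q => and_congr_right fun hq => ?_⟩
  obtain ⟨hsq, hqD⟩ := hsign q (hU hq)
  change 0 < displacement τ (v p) q ↔ q ∈ D ∧ 0 < height τ v q
  rw [and_iff_right hqD, ← sign_eq_one_iff, hsq, sign_eq_one_iff]

theorem IsNormalField.mem_closure_setOf_height_pos (hv : IsNormalField τ D v)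
    (hτ : IsReversingInvolution τ D) (hD : IsOpen D) (hvc : ContinuousOn v D) {p : E}
    (hp : p ∈ D) (hfix : τ p = p) : p ∈ closure {q ∈ D | 0 < height τ v q} := by
  obtain ⟨N, hN, heq⟩ := hv.exists_mem_nhds_inter_setOf_displacement_pos_eq hD hvc hp
  have := mem_closure_setOf_pos_of_hasFDerivAt
    (hτ.hasStrictFDerivAt_displacement hD (v p) hp).hasFDerivAt
    (hv.fderiv_displacement_ne_zero hτ hD hp hfix) ((hv.height_eq_zero_iff hp).2 hfix) hN
  exact closure_mono inter_subset_right (heq N Subset.rfl ▸ this)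

theorem IsNormalField.exists_mem_nhds_isPreconnected_inter_setOf_height_pos [CompleteSpace E]
    (hv : IsNormalField τ D v) (hτ : IsReversingInvolution τ D) (hD : IsOpen D)
    (hvc : ContinuousOn v D) {p : E} (hp : p ∈ D) (hfix : τ p = p) :
    ∃ U ∈ 𝓝 p, IsPreconnected (U ∩ {q ∈ D | 0 < height τ v q}) := by
  obtain ⟨N, hN, heq⟩ := hv.exists_mem_nhds_inter_setOf_displacement_pos_eq hD hvc hp
  obtain ⟨U, hU, hUN, hconn⟩ := exists_mem_nhds_isPreconnected_inter_setOf_pos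
    (hτ.hasStrictFDerivAt_displacement hD (v p) hp)
    (hv.fderiv_displacement_ne_zero hτ hD hp hfix) hN
  exact ⟨U, hU, heq U hUN ▸ hconn⟩

theorem IsNormalField.isPreconnected_setOf_height_pos [CompleteSpace E]
    (hv : IsNormalField τ D v) (hτ : IsReversingInvolution τ D) (hD : IsOpen D)
    (hD' : IsPreconnected D) (hvc : ContinuousOn v D) (hvτ : EqOn (v ∘ τ) v D) :
    IsPreconnected {p ∈ D | 0 < height τ v p} := by
  have := Subtype.preconnectedSpace hD'
  have hnonneg : IsPreconnected {p ∈ D | 0 ≤ height τ v p} := by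
    change IsPreconnected (D ∩ {p | 0 ≤ height τ v p})
    rw [← Subtype.image_preimage_coe]
    exact IsPreconnected.image (isPreconnected_setOf_nonneg_of_comp_eq_neg
        (hτ.contDiffOn.continuousOn.mapsToRestrict hτ.mapsTo)
        (hτ.continuousOn_height hvc).domRestrict (fun x => hτ.height_apply hvτ x.2)
        fun x hx => Subtype.ext ((hv.height_eq_zero_iff x.2).1 hx))
      _ continuous_subtype_val.continuousOn
  have hopen : IsOpen {p ∈ D | 0 < height τ v p} :=
    (hτ.continuousOn_height hvc).isOpen_inter_preimage hD isOpen_Ioi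
  have hcases {p : E} (hp : p ∈ {p ∈ D | 0 ≤ height τ v p}) :
      p ∈ {p ∈ D | 0 < height τ v p} ∨ τ p = p :=
    hp.2.lt_or_eq.imp (⟨hp.1, ·⟩) fun h => (hv.height_eq_zero_iff hp.1).1 h.symm
  refine isPreconnected_of_subset_closure hnonneg (fun p hp => ⟨hp.1, hp.2.le⟩) (fun p hp => ?_)
    fun p hp => ?_
  · exact (hcases hp).elim (fun h => subset_closure h)
      (hv.mem_closure_setOf_height_pos hτ hD hvc hp.1)
  · refine (hcases hp).elim (fun h => ?_)
      (hv.exists_mem_nhds_isPreconnected_inter_setOf_height_pos hτ hD hvc hp.1)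
    obtain ⟨r, hr, hball⟩ := Metric.isOpen_iff.1 hopen p h
    exact ⟨ball p r, ball_mem_nhds p hr,
      (inter_eq_left.2 hball).symm ▸ (convex_ball p r).isPreconnected⟩

theorem IsNormalField.isPreconnected_setOf_fixed (hv : IsNormalField τ D v)
    (hτ : IsReversingInvolution τ D) (hD : IsOpen D) (hDsc : IsSimplyConnected D)
    (hvc : ContinuousOn v D) (hvτ : EqOn (v ∘ τ) v D) : IsPreconnected {p ∈ D | τ p = p} := by
  have := hDsc.simplyConnectedSpace
  have := hD.locallyPathConnectedSpace
  have hzero : IsPreconnected {x : D | height τ v x = 0} :=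
    isPreconnected_setOf_eq_zero_of_comp_eq_neg
      (hτ.contDiffOn.continuousOn.mapsToRestrict hτ.mapsTo)
      (hτ.continuousOn_height hvc).domRestrict (fun x => hτ.height_apply hvτ x.2)
      fun x hx => Subtype.ext ((hv.height_eq_zero_iff x.2).1 hx)
  convert hzero.image _ continuous_subtype_val.continuousOn using 1
  ext p
  constructor
  · exact fun hp => ⟨⟨p, hp.1⟩, (hv.height_eq_zero_iff hp.1).2 hp.2, rfl⟩
  · rintro ⟨x, hx, rfl⟩
    exact ⟨x.2, (hv.height_eq_zero_iff x.2).1 hx⟩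

theorem IsNormalField.exists_sides [CompleteSpace E] (hv : IsNormalField τ D v)
    (hτ : IsReversingInvolution τ D) (hD : IsOpen D) (hD' : IsPreconnected D)
    (hvc : ContinuousOn v D) (hvτ : EqOn (v ∘ τ) v D) (hfix : ∃ p ∈ D, τ p = p) :
    ∃ A B, IsOpen A ∧ IsOpen B ∧ IsConnected A ∧ IsConnected B ∧ Disjoint A B ∧
      A ∪ B = D \ {p ∈ D | τ p = p} ∧ τ '' A = B ∧ τ '' B = A := by
  have hh := hτ.continuousOn_height hvc
  have himage := hτ.image_setOf_height_pos hvτ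
  have hpos : IsConnected {p ∈ D | 0 < height τ v p} := by
    obtain ⟨p, hp, hpfix⟩ := hfix
    exact ⟨closure_nonempty_iff.1 ⟨p, hv.mem_closure_setOf_height_pos hτ hD hvc hp hpfix⟩,
      hv.isPreconnected_setOf_height_pos hτ hD hD' hvc hvτ⟩
  refine ⟨{p ∈ D | 0 < height τ v p}, {p ∈ D | height τ v p < 0},
    hh.isOpen_inter_preimage hD isOpen_Ioi, hh.isOpen_inter_preimage hD isOpen_Iio, hpos,
    himage ▸ hpos.image τ (hτ.contDiffOn.continuousOn.mono (sep_subset _ _)), ?_, ?_, himage, ?_⟩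
  · exact disjoint_left.2 fun p hp hp' => hp.2.not_gt hp'.2
  · ext p
    refine ⟨?_, fun ⟨hp, hne⟩ => ?_⟩
    · rintro (⟨hp, hlt⟩ | ⟨hp, hlt⟩)
      · exact ⟨hp, fun h => hlt.ne' ((hv.height_eq_zero_iff hp).2 h.2)⟩
      · exact ⟨hp, fun h => hlt.ne ((hv.height_eq_zero_iff hp).2 h.2)⟩
    · have h₀ : height τ v p ≠ 0 := fun h => hne ⟨hp, (hv.height_eq_zero_iff hp).1 h⟩
      exact h₀.lt_or_gt.symm.imp (⟨hp, ·⟩) (⟨hp, ·⟩)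
  · rw [← himage, image_image]
    exact (image_congr fun p hp => hτ.involutive p hp.1).trans (image_id' _)

end Components

section Trajectories

variable {E : Type*} [NormedAddCommGroup E] [NormedSpace ℝ E] {F : Set E} {V : E → E}

/-- `γ` is a solution of `γ' = V ∘ γ` on the open interval `J`, taking values in `F`. -/
structure IsTrajectory (F : Set E) (V : E → E) (γ : ℝ → E) (J : Set ℝ) : Prop where
  isOpen : IsOpen J
  ordConnected : J.OrdConnected
  mapsTo : MapsTo γ J F
  hasDerivAt : ∀ t ∈ J, HasDerivAt γ (V (γ t)) t

/-- `c` is a trajectory on the open interval `T` which passes through every point of `F` in the open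
set `U`, and `σ` recovers the time of the passage. The condition on the derivative of `σ` says that
`σ` grows at unit speed along every trajectory in `U`. -/
structure IsFlowBox (F : Set E) (V : E → E) (U : Set E) (T : Set ℝ) (σ : E → ℝ) (c : ℝ → E) :
    Prop extends IsTrajectory F V c T where
  isOpen_domain : IsOpen U
  time_mem : ∀ q ∈ U ∩ F, σ q ∈ T
  curve_time : ∀ q ∈ U ∩ F, c (σ q) = q
  hasFDerivAt_time : ∀ q ∈ U ∩ F, ∃ σ' : E →L[ℝ] ℝ, HasFDerivAt σ σ' q ∧ σ' (V q) = 1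

/-- Every point of `F` lies in a flow box of the field `V`. -/
def HasFlowBoxes (F : Set E) (V : E → E) : Prop :=
  ∀ p ∈ F, ∃ U T σ c, p ∈ U ∧ IsFlowBox F V U T σ c

/-- A trajectory on a nonempty interval which cannot be extended to a larger one. -/
structure IsMaximalTrajectory (F : Set E) (V : E → E) (γ : ℝ → E) (J : Set ℝ) : Prop
    extends IsTrajectory F V γ J where
  nonempty : J.Nonempty
  subset_of_eq : ∀ δ K t, IsTrajectory F V δ K → t ∈ J → t ∈ K → δ t = γ t → K ⊆ J

variable {U : Set E} {T J K : Set ℝ} {σ : E → ℝ} {c γ δ : ℝ → E} {t : ℝ}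

theorem IsTrajectory.continuousOn (hγ : IsTrajectory F V γ J) : ContinuousOn γ J :=
  fun t ht => (hγ.hasDerivAt t ht).continuousAt.continuousWithinAt

theorem IsTrajectory.mono (hγ : IsTrajectory F V γ J) (hK : IsOpen K) (hK' : K.OrdConnected)
    (hKJ : K ⊆ J) : IsTrajectory F V γ K :=
  ⟨hK, hK', hγ.mapsTo.mono_left hKJ, fun t ht => hγ.hasDerivAt t (hKJ ht)⟩

theorem IsTrajectory.comp_add_const (hγ : IsTrajectory F V γ J) (a : ℝ) :
    IsTrajectory F V (fun t => γ (t + a)) {t | t + a ∈ J} :=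
  ⟨hγ.isOpen.preimage (continuous_add_const a),
    hγ.ordConnected.preimage_mono fun _ _ h => add_le_add_left h a, fun _ ht => hγ.mapsTo ht,
    fun t ht => (hγ.hasDerivAt _ ht).comp_add_const t a⟩

theorem IsFlowBox.eventually_eq (hb : IsFlowBox F V U T σ c) (hγ : IsTrajectory F V γ J)
    (ht : t ∈ J) (htU : γ t ∈ U) : ∀ᶠ s in 𝓝 t, γ s = c (σ (γ t) + (s - t)) := by
  obtain ⟨r, hr, hball⟩ := Metric.eventually_nhds_iff_ball.1 ((hγ.isOpen.eventually_mem ht).and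
    ((hγ.hasDerivAt t ht).continuousAt.eventually_mem (hb.isOpen_domain.mem_nhds htU)))
  have hmem : ∀ s ∈ ball t r, γ s ∈ U ∩ F := fun s hs => ⟨(hball s hs).2, hγ.mapsTo (hball s hs).1⟩
  have hderiv : ∀ s ∈ ball t r, HasDerivAt (fun s => σ (γ s) - s) 0 s := by
    intro s hs
    obtain ⟨σ', hσ', hone⟩ := hb.hasFDerivAt_time _ (hmem s hs)
    have := (hσ'.comp_hasDerivAt s (hγ.hasDerivAt s (hball s hs).1)).sub (hasDerivAt_id s)
    rwa [hone, sub_self] at this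
  filter_upwards [ball_mem_nhds t hr] with s hs
  have hconst : σ (γ s) - s = σ (γ t) - t :=
    isOpen_ball.is_const_of_deriv_eq_zero (convex_ball t r).isPreconnected
      (fun s hs => (hderiv s hs).differentiableAt.differentiableWithinAt)
      (fun s hs => (hderiv s hs).deriv) hs (mem_ball_self hr)
  rw [show σ (γ t) + (s - t) = σ (γ s) by linarith, hb.curve_time _ (hmem s hs)]

theorem IsTrajectory.eqOn (hbox : HasFlowBoxes F V) (hγ : IsTrajectory F V γ J)
    (hδ : IsTrajectory F V δ J) (ht : t ∈ J) (heq : γ t = δ t) : EqOn γ δ J := by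
  suffices {s ∈ J | γ s = δ s} = J from fun s hs => (this.symm ▸ hs : s ∈ {s ∈ J | γ s = δ s}).2
  refine eq_of_subset_of_mem_nhdsWithin hγ.ordConnected.isPreconnected (sep_subset _ _)
    ⟨t, ht, heq⟩ ?_ ?_
  · rintro s ⟨hs, hγδ⟩
    obtain ⟨U, T, σ, c, hsU, hb⟩ := hbox _ (hγ.mapsTo hs)
    filter_upwards [self_mem_nhdsWithin, nhdsWithin_le_nhds (hb.eventually_eq hγ hs hsU),
      nhdsWithin_le_nhds (hb.eventually_eq hδ hs (hγδ ▸ hsU))] with x hx hγx hδx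
    exact ⟨hx, by rw [hγx, hδx, hγδ]⟩
  · rintro s ⟨hs, hne⟩
    have := ((hγ.hasDerivAt s hs).continuousAt.ne_iff_eventually_ne
      (hδ.hasDerivAt s hs).continuousAt).1 fun h => hne ⟨hs, h⟩
    filter_upwards [nhdsWithin_le_nhds this] with x hx hx'
    exact hx hx'.2

theorem IsTrajectory.eqOn_inter (hbox : HasFlowBoxes F V) (hγ : IsTrajectory F V γ J)
    (hδ : IsTrajectory F V δ K) (htJ : t ∈ J) (htK : t ∈ K) (heq : γ t = δ t) :
    EqOn γ δ (J ∩ K) :=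
  have ho := hγ.isOpen.inter hδ.isOpen
  have hc := hγ.ordConnected.inter hδ.ordConnected
  (hγ.mono ho hc inter_subset_left).eqOn hbox (hδ.mono ho hc inter_subset_right) ⟨htJ, htK⟩ heq

theorem isTrajectory_of_forall_eqOn (hJ : J.OrdConnected)
    (h : ∀ t ∈ J, ∃ δ K, IsTrajectory F V δ K ∧ t ∈ K ∧ K ⊆ J ∧ EqOn γ δ K) :
    IsTrajectory F V γ J where
  isOpen := isOpen_iff_mem_nhds.2 fun t ht => by
    obtain ⟨δ, K, hδ, htK, hKJ, -⟩ := h t ht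
    exact mem_of_superset (hδ.isOpen.mem_nhds htK) hKJ
  ordConnected := hJ
  mapsTo t ht := by
    obtain ⟨δ, K, hδ, htK, -, heq⟩ := h t ht
    exact heq htK ▸ hδ.mapsTo htK
  hasDerivAt t ht := by
    obtain ⟨δ, K, hδ, htK, -, heq⟩ := h t ht
    exact heq htK ▸ (hδ.hasDerivAt t htK).congr_of_eventuallyEq
      (heq.eventuallyEq_of_mem (hδ.isOpen.mem_nhds htK))

theorem IsTrajectory.piecewise (hγ : IsTrajectory F V γ J) (hδ : IsTrajectory F V δ K)
    (hJK : (J ∩ K).Nonempty) (heq : EqOn γ δ (J ∩ K)) [∀ t, Decidable (t ∈ J)] :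
    IsTrajectory F V (J.piecewise γ δ) (J ∪ K) := by
  obtain ⟨t, htJ, htK⟩ := hJK
  refine isTrajectory_of_forall_eqOn (IsPreconnected.union t htJ htK
    hγ.ordConnected.isPreconnected hδ.ordConnected.isPreconnected).ordConnected ?_
  rintro s (hs | hs)
  · exact ⟨γ, J, hγ, hs, subset_union_left, piecewise_eqOn J γ δ⟩
  · refine ⟨δ, K, hδ, hs, subset_union_right, fun x hx => ?_⟩
    by_cases hxJ : x ∈ J
    · rw [piecewise_eq_of_mem _ _ _ hxJ, heq ⟨hxJ, hx⟩]
    · exact piecewise_eq_of_notMem _ _ _ hxJ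

theorem exists_greatest_isTrajectory (hbox : HasFlowBoxes F V) {p : E} (hp : p ∈ F) (t₀ : ℝ) :
    ∃ γ J, IsTrajectory F V γ J ∧ t₀ ∈ J ∧ γ t₀ = p ∧
      ∀ δ K, IsTrajectory F V δ K → t₀ ∈ K → δ t₀ = p → K ⊆ J := by
  let J : Set ℝ := {t | ∃ δ K, IsTrajectory F V δ K ∧ t₀ ∈ K ∧ δ t₀ = p ∧ t ∈ K}
  have hlocal (t : ℝ) : ∃ q : E, ∀ δ K, IsTrajectory F V δ K → t₀ ∈ K → δ t₀ = p → t ∈ K →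
      q = δ t := by
    by_cases ht : t ∈ J
    · obtain ⟨δ, K, hδ, hK, hδp, htK⟩ := ht
      exact ⟨δ t, fun δ' K' hδ' hK' hδp' htK' =>
        hδ.eqOn_inter hbox hδ' hK hK' (hδp.trans hδp'.symm) ⟨htK, htK'⟩⟩
    · exact ⟨0, fun δ K hδ hK hδp htK => absurd ⟨δ, K, hδ, hK, hδp, htK⟩ ht⟩
  choose γ hγ using hlocal
  have hconn : IsPreconnected J := isPreconnected_of_forall t₀ fun t ⟨δ, K, hδ, hK, hδp, htK⟩ =>
    ⟨K, fun s hs => ⟨δ, K, hδ, hK, hδp, hs⟩, hK, htK, hδ.ordConnected.isPreconnected⟩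
  obtain ⟨U, T, σ, c, hpU, hb⟩ := hbox p hp
  have hc : IsTrajectory F V (fun t => c (t + (σ p - t₀))) {t | t + (σ p - t₀) ∈ T} :=
    hb.comp_add_const _
  have ht₀ : t₀ + (σ p - t₀) ∈ T := by simpa using hb.time_mem p ⟨hpU, hp⟩
  have hct₀ : c (t₀ + (σ p - t₀)) = p := by simpa using hb.curve_time p ⟨hpU, hp⟩
  refine ⟨γ, J, isTrajectory_of_forall_eqOn hconn.ordConnected ?_, ⟨_, _, hc, ht₀, hct₀, ht₀⟩,
    (hγ t₀ _ _ hc ht₀ hct₀ ht₀).trans hct₀, fun δ K hδ hK hδp t ht => ⟨δ, K, hδ, hK, hδp, ht⟩⟩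
  rintro t ⟨δ, K, hδ, hK, hδp, htK⟩
  exact ⟨δ, K, hδ, htK, fun s hs => ⟨δ, K, hδ, hK, hδp, hs⟩,
    fun s hs => hγ s δ K hδ hK hδp hs⟩

theorem exists_isMaximalTrajectory (hbox : HasFlowBoxes F V) (hF : F.Nonempty) :
    ∃ γ J, IsMaximalTrajectory F V γ J := by
  classical
  obtain ⟨p, hp⟩ := hF
  obtain ⟨γ, J, hγ, h₀, hγp, hgreatest⟩ := exists_greatest_isTrajectory hbox hp 0
  refine ⟨γ, J, hγ, ⟨0, h₀⟩, fun δ K t hδ htJ htK heq => ?_⟩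
  have hglue := hγ.piecewise hδ ⟨t, htJ, htK⟩ (hγ.eqOn_inter hbox hδ htJ htK heq.symm)
  exact subset_union_right.trans (hgreatest _ _ hglue (.inl h₀)
    ((piecewise_eq_of_mem _ _ _ h₀).trans hγp))

theorem IsMaximalTrajectory.inter_subset_image (hγ : IsMaximalTrajectory F V γ J)
    (hbox : HasFlowBoxes F V) (hb : IsFlowBox F V U T σ c) (ht : t ∈ J) (htU : γ t ∈ U) :
    U ∩ F ⊆ γ '' J := by
  have hγt : γ t ∈ U ∩ F := ⟨htU, hγ.mapsTo ht⟩
  obtain ⟨a, ha⟩ : ∃ a, t + a = σ (γ t) := ⟨σ (γ t) - t, add_sub_cancel _ _⟩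
  have htT : t + a ∈ T := ha ▸ hb.time_mem _ hγt
  have heq : c (t + a) = γ t := by rw [ha, hb.curve_time _ hγt]
  have hc := hb.comp_add_const a
  have hTJ := hγ.subset_of_eq _ _ t hc ht htT heq
  intro q hq
  have hs : σ q - a ∈ {s | s + a ∈ T} := by simpa using hb.time_mem q hq
  refine ⟨σ q - a, hTJ hs, ?_⟩
  rw [← hc.eqOn_inter hbox hγ.toIsTrajectory htT ht heq ⟨hs, hTJ hs⟩]
  simpa using hb.curve_time q hq

theorem IsMaximalTrajectory.image_eq (hγ : IsMaximalTrajectory F V γ J)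
    (hbox : HasFlowBoxes F V) (hF : IsPreconnected F) : γ '' J = F := by
  refine eq_of_subset_of_mem_nhdsWithin hF hγ.mapsTo.image_subset (hγ.nonempty.image γ) ?_ ?_
  · rintro _ ⟨t, ht, rfl⟩
    obtain ⟨U, T, σ, c, hU, hb⟩ := hbox _ (hγ.mapsTo ht)
    exact mem_of_superset (inter_mem_nhdsWithin F (hb.isOpen_domain.mem_nhds hU))
      (inter_comm F U ▸ hγ.inter_subset_image hbox hb ht hU)
  · rintro q ⟨hq, hqγ⟩
    obtain ⟨U, T, σ, c, hU, hb⟩ := hbox q hq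
    filter_upwards [nhdsWithin_le_nhds (hb.isOpen_domain.mem_nhds hU)]
    rintro _ hxU ⟨t, ht, rfl⟩
    exact hqγ (hγ.inter_subset_image hbox hb ht hxU ⟨hU, hq⟩)

theorem IsTrajectory.image_mem_nhdsWithin (hγ : IsTrajectory F V γ J) (hbox : HasFlowBoxes F V)
    (ht : t ∈ J) {W : Set ℝ} (hW : W ∈ 𝓝 t) : γ '' W ∈ 𝓝[F] γ t := by
  obtain ⟨U, T, σ, c, htU, hb⟩ := hbox _ (hγ.mapsTo ht)
  obtain ⟨σ', hσ', -⟩ := hb.hasFDerivAt_time _ ⟨htU, hγ.mapsTo ht⟩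
  have htime : Tendsto (fun q => t + (σ q - σ (γ t))) (𝓝 (γ t)) (𝓝 t) := by
    have : ContinuousAt (fun q => t + (σ q - σ (γ t))) (γ t) :=
      continuousAt_const.add (hσ'.continuousAt.sub continuousAt_const)
    simpa [ContinuousAt] using this
  filter_upwards [self_mem_nhdsWithin, nhdsWithin_le_nhds (hb.isOpen_domain.mem_nhds htU),
    nhdsWithin_le_nhds (htime hW),
    nhdsWithin_le_nhds (htime.eventually (hb.eventually_eq hγ ht htU))] with q hqF hqU hqW hq
  refine ⟨_, hqW, ?_⟩
  rw [hq, add_sub_cancel_left, add_sub_cancel, hb.curve_time q ⟨hqU, hqF⟩]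

/- A trajectory which returns to its starting point is periodic, so one period of it is open, as
well as compact, in `F`. -/
theorem IsTrajectory.isCompact_of_eq (hγ : IsTrajectory F V γ J) (hbox : HasFlowBoxes F V)
    (hF : IsPreconnected F) {t₁ t₂ : ℝ} (h₁ : t₁ ∈ J) (h₂ : t₂ ∈ J) (hlt : t₁ < t₂)
    (heq : γ t₁ = γ t₂) : IsCompact F := by
  have hJ : Icc t₁ t₂ ⊆ J := hγ.ordConnected.out h₁ h₂
  have hcomp : IsCompact (γ '' Icc t₁ t₂) :=
    isCompact_Icc.image_of_continuousOn (hγ.continuousOn.mono hJ)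
  obtain ⟨a, rfl⟩ : ∃ a, t₂ = t₁ + a := ⟨t₂ - t₁, (add_sub_cancel _ _).symm⟩
  have hshift := hγ.comp_add_const a
  have hperiod : EqOn γ (fun s => γ (s + a)) (J ∩ {s | s + a ∈ J}) :=
    hγ.eqOn_inter hbox hshift h₁ h₂ heq
  have hstart : γ '' Icc t₁ (t₁ + a) ∈ 𝓝[F] γ t₁ := by
    have hW : J ∩ {s | s + a ∈ J} ∩ Ioo (t₁ - a) (t₁ + a) ∈ 𝓝 t₁ :=
      inter_mem ((hγ.isOpen.inter hshift.isOpen).mem_nhds ⟨h₁, h₂⟩)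
        (Ioo_mem_nhds (by linarith) hlt)
    refine mem_of_superset (hγ.image_mem_nhdsWithin hbox h₁ hW) ?_
    rintro _ ⟨s, ⟨hs, hsa⟩, rfl⟩
    rcases le_or_gt t₁ s with hle | hgt
    · exact mem_image_of_mem γ ⟨hle, hsa.2.le⟩
    · rw [hperiod hs]
      exact mem_image_of_mem γ ⟨by linarith [hsa.1], by linarith⟩
  suffices γ '' Icc t₁ (t₁ + a) = F from this ▸ hcomp
  refine eq_of_subset_of_mem_nhdsWithin hF (hγ.mapsTo.mono_left hJ).image_subset
    ((nonempty_Icc.2 hlt.le).image γ) ?_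
    fun q hq => nhdsWithin_le_nhds (hcomp.isClosed.isOpen_compl.mem_nhds hq.2)
  rintro _ ⟨t, ht, rfl⟩
  rcases ht.1.eq_or_lt with rfl | hlt₁
  · exact hstart
  rcases ht.2.eq_or_lt with rfl | hlt₂
  · exact heq ▸ hstart
  · exact hγ.image_mem_nhdsWithin hbox (hJ ht) (Icc_mem_nhds hlt₁ hlt₂)

theorem IsTrajectory.injOn (hγ : IsTrajectory F V γ J) (hbox : HasFlowBoxes F V)
    (hF : IsPreconnected F) (hF' : ¬IsCompact F) : InjOn γ J := by
  intro t₁ h₁ t₂ h₂ heq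
  by_contra hne
  rcases lt_or_gt_of_ne hne with hlt | hgt
  · exact hF' (hγ.isCompact_of_eq hbox hF h₁ h₂ hlt heq)
  · exact hF' (hγ.isCompact_of_eq hbox hF h₂ h₁ hgt heq.symm)

end Trajectories

section Reparametrization

theorem exists_contDiff_range_eq_Ioi (a : ℝ) :
    ∃ φ : ℝ → ℝ, ContDiff ℝ 1 φ ∧ (∀ x, 0 < deriv φ x) ∧ range φ = Ioi a := by
  refine ⟨fun x => a + Real.exp x, by fun_prop, fun x => by simp [Real.exp_pos], ?_⟩
  change range ((a + ·) ∘ Real.exp) = Ioi a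
  rw [range_comp, Real.range_exp, image_const_add_Ioi, add_zero]

theorem exists_contDiff_range_eq_Iio (a : ℝ) :
    ∃ φ : ℝ → ℝ, ContDiff ℝ 1 φ ∧ (∀ x, 0 < deriv φ x) ∧ range φ = Iio a := by
  obtain ⟨φ, hφ, hpos, hrange⟩ := exists_contDiff_range_eq_Ioi (-a)
  refine ⟨fun x => -φ (-x), by fun_prop, fun x => ?_, ?_⟩
  · simp [deriv.fun_neg, deriv_comp_neg, hpos]
  · change range (Neg.neg ∘ φ ∘ Neg.neg) = Iio a
    rw [range_comp, neg_surjective.range_comp, hrange]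
    simp

theorem exists_contDiff_range_eq_Ioo {a b : ℝ} (hab : a < b) :
    ∃ φ : ℝ → ℝ, ContDiff ℝ 1 φ ∧ (∀ x, 0 < deriv φ x) ∧ range φ = Ioo a b := by
  refine ⟨fun x => a + (b - a) * Real.sigmoid x, ?_, fun x => ?_, ?_⟩
  · exact contDiff_const.add (contDiff_const.mul (contDiff_sigmoid.of_le le_top))
  · have := sub_pos.2 hab
    have := Real.sigmoid_pos x
    have := sub_pos.2 (Real.sigmoid_lt_one x)
    rw [(((Real.hasDerivAt_sigmoid x).const_mul (b - a)).const_add a).deriv]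
    positivity
  · change range ((a + ·) ∘ ((b - a) * ·) ∘ Real.sigmoid) = Ioo a b
    rw [range_comp, range_comp, Real.range_sigmoid, image_mul_left_Ioo (sub_pos.2 hab),
      image_const_add_Ioo]
    simp

theorem exists_contDiff_range_eq {J : Set ℝ} (hJ : IsOpen J) (hJ' : J.OrdConnected)
    (hJne : J.Nonempty) :
    ∃ φ : ℝ → ℝ, ContDiff ℝ 1 φ ∧ (∀ x, 0 < deriv φ x) ∧ range φ = J := by
  have hIoo {a b : ℝ} (h : J = Ioo a b) :
      ∃ φ : ℝ → ℝ, ContDiff ℝ 1 φ ∧ (∀ x, 0 < deriv φ x) ∧ range φ = J := by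
    rw [h] at hJne ⊢
    exact exists_contDiff_range_eq_Ioo (nonempty_Ioo.1 hJne)
  have hint := hJ.interior_eq
  have hcases := hJ'.isPreconnected.mem_intervals
  generalize sInf J = a, sSup J = b at hcases
  rcases hcases with h | h | h | h | h | h | h | h | h | h
  · exact hIoo (a := a) (b := b) (by rw [← hint, h, interior_Icc])
  · exact hIoo (a := a) (b := b) (by rw [← hint, h, interior_Ico])
  · exact hIoo (a := a) (b := b) (by rw [← hint, h, interior_Ioc])
  · exact hIoo h
  · rw [← hint, h, interior_Ici]
    exact exists_contDiff_range_eq_Ioi a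
  · exact h ▸ exists_contDiff_range_eq_Ioi a
  · rw [← hint, h, interior_Iic]
    exact exists_contDiff_range_eq_Iio b
  · exact h ▸ exists_contDiff_range_eq_Iio b
  · exact ⟨id, contDiff_id, by simp, by rw [range_id, h]⟩
  · exact absurd h hJne.ne_empty

end Reparametrization

section Classification

variable {E : Type*} [NormedAddCommGroup E] [NormedSpace ℝ E] {F : Set E} {V : E → E}

/-- `F` is the image of a `C¹` immersion of the real line which is a homeomorphism onto `F`. -/
def IsEmbeddedLine (F : Set E) : Prop :=
  ∃ γ : ℝ → E, ContDiff ℝ 1 γ ∧ (∀ t, deriv γ t ≠ 0) ∧ Topology.IsEmbedding γ ∧ range γ = F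

theorem HasFlowBoxes.isEmbeddedLine (hbox : HasFlowBoxes F V) (hF : IsConnected F)
    (hF' : ¬IsCompact F) (hV : ContinuousOn V F) (hV₀ : ∀ p ∈ F, V p ≠ 0) : IsEmbeddedLine F := by
  obtain ⟨γ, J, hγ⟩ := exists_isMaximalTrajectory hbox hF.nonempty
  obtain ⟨φ, hφ, hpos, rfl⟩ := exists_contDiff_range_eq hγ.isOpen hγ.ordConnected hγ.nonempty
  have hrange : range (γ ∘ φ) = F := range_comp γ φ ▸ hγ.image_eq hbox hF.isPreconnected
  have hφd (x : ℝ) : HasStrictDerivAt φ (deriv φ x) x :=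
    hφ.contDiffAt.hasStrictDerivAt one_ne_zero
  have hderiv (x : ℝ) : HasDerivAt (γ ∘ φ) (deriv φ x • V (γ (φ x))) x :=
    (hγ.hasDerivAt _ (mem_range_self x)).scomp x (hφd x).hasDerivAt
  have hcont : Continuous (γ ∘ φ) :=
    continuous_iff_continuousAt.2 fun x => (hderiv x).continuousAt
  have hmem (x : ℝ) : γ (φ x) ∈ F := hγ.mapsTo (mem_range_self x)
  refine ⟨γ ∘ φ, contDiff_one_iff_deriv.2 ⟨fun x => (hderiv x).differentiableAt, ?_⟩,
    fun x => ?_, isEmbedding_of_image_mem_nhdsWithin_range hcont ?_ ?_, hrange⟩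
  · rw [funext fun x => (hderiv x).deriv]
    exact (hφ.continuous_deriv le_rfl).smul (hV.comp_continuous hcont hmem)
  · rw [(hderiv x).deriv]
    exact smul_ne_zero (hpos x).ne' (hV₀ _ (hmem x))
  · have hinj := hγ.injOn hbox hF.isPreconnected hF'
    exact fun x y h => (strictMono_of_deriv_pos hpos).injective
      (hinj (mem_range_self x) (mem_range_self y) h)
  · intro x W hW
    rw [hrange, image_comp]
    exact hγ.image_mem_nhdsWithin hbox (mem_range_self x)
      ((hφd x).map_nhds_eq (hpos x).ne' ▸ image_mem_map hW)

end Classification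

section FlowBox

theorem exists_openPartialHomeomorph_hasFDerivAt_symm {E G : Type*} [NormedAddCommGroup E]
    [NormedSpace ℝ E] [CompleteSpace E] [NormedAddCommGroup G] [NormedSpace ℝ G] {φ : E → G} {p : E}
    {φ' : E ≃L[ℝ] G} (hφ : ContDiffAt ℝ 1 φ p) (hφ' : fderiv ℝ φ p = φ') :
    ∃ Φ : OpenPartialHomeomorph E G, p ∈ Φ.source ∧ ⇑Φ = φ ∧ ∀ q ∈ Φ.source, ∃ e : E ≃L[ℝ] G,
      fderiv ℝ φ q = e ∧ HasFDerivAt Φ.symm (e.symm : G →L[ℝ] E) (φ q) := by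
  have hderiv : HasFDerivAt φ (φ' : E →L[ℝ] G) p :=
    hφ' ▸ (hφ.differentiableAt one_ne_zero).hasFDerivAt
  let Φ := hφ.toOpenPartialHomeomorph φ hderiv one_ne_zero
  have hinvertible : ∀ᶠ q in 𝓝 p, ∃ e : E ≃L[ℝ] G, HasFDerivAt φ (e : E →L[ℝ] G) q := by
    filter_upwards [hφ.eventually (by simp), (hφ.continuousAt_fderiv one_ne_zero).preimage_mem_nhds
      (hφ' ▸ φ'.nhds)] with q hq ⟨e, he⟩
    exact ⟨e, he ▸ (hq.differentiableAt one_ne_zero).hasFDerivAt⟩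
  obtain ⟨W, hW, hWo, hpW⟩ := _root_.eventually_nhds_iff.1 hinvertible
  refine ⟨Φ.restrOpen W hWo, ⟨hφ.mem_toOpenPartialHomeomorph_source hderiv one_ne_zero, hpW⟩, rfl,
    fun q hq => ?_⟩
  obtain ⟨e, he⟩ := hW q hq.2
  have hsymm : Φ.symm (φ q) = q := Φ.left_inv hq.1
  exact ⟨e, he.fderiv, Φ.hasFDerivAt_symm (Φ.map_source hq.1) (hsymm.symm ▸ he)⟩

theorem exists_openPartialHomeomorph_hasDerivAt_of_continuous {k : ℝ → ℝ} {N : Set ℝ} {x₀ : ℝ}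
    (hN : N ∈ 𝓝 x₀) (hk : Continuous k) (hk₀ : k x₀ ≠ 0) :
    ∃ e : OpenPartialHomeomorph ℝ ℝ, x₀ ∈ e.source ∧ e.source ⊆ N ∧ e.target.OrdConnected ∧
      ∀ x ∈ e.source, HasDerivAt e (k x) x := by
  have hderiv (x : ℝ) : HasStrictDerivAt (fun x => ∫ y in x₀..x, k y) (k x) x :=
    hk.integral_hasStrictDerivAt x₀ x
  have hequiv := (hderiv x₀).hasStrictFDerivAt_equiv hk₀
  let e := (hequiv.toOpenPartialHomeomorph _).restrOpen (interior N) isOpen_interior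
  have hmem : x₀ ∈ e.source :=
    ⟨hequiv.mem_toOpenPartialHomeomorph_source, mem_interior_iff_mem_nhds.2 hN⟩
  obtain ⟨ε, hε, hball⟩ := Metric.isOpen_iff.1 e.open_target _ (e.map_source hmem)
  refine ⟨(e.symm.restrOpen (ball (e x₀) ε) isOpen_ball).symm, ?_, fun x hx => ?_, ?_,
    fun x _ => (hderiv x).hasDerivAt⟩
  · exact ⟨hmem, mem_ball_self hε⟩
  · exact interior_subset hx.1.2
  · change (e.target ∩ ball (e x₀) ε).OrdConnected
    rw [inter_eq_right.2 hball]
    exact (convex_ball _ ε).ordConnected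

theorem exists_openPartialHomeomorph_hasDerivAt {k : ℝ → ℝ} {N : Set ℝ} {x₀ : ℝ} (hN : N ∈ 𝓝 x₀)
    (hk : ContinuousOn k N) (hk₀ : k x₀ ≠ 0) :
    ∃ e : OpenPartialHomeomorph ℝ ℝ, x₀ ∈ e.source ∧ e.source ⊆ N ∧ e.target.OrdConnected ∧
      ∀ x ∈ e.source, HasDerivAt e (k x) x := by
  obtain ⟨r, hr, hball⟩ := Metric.nhds_basis_closedBall.mem_iff.1 hN
  rw [Real.closedBall_eq_Icc] at hball
  have hx₀ : Icc (x₀ - r) (x₀ + r) ∈ 𝓝 x₀ := Icc_mem_nhds (by linarith) (by linarith)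
  let K : ℝ → ℝ := IccExtend (by linarith) ((Icc (x₀ - r) (x₀ + r)).domRestrict k)
  have hKk : EqOn K k (Icc (x₀ - r) (x₀ + r)) := fun x hx => IccExtend_of_mem _ _ hx
  obtain ⟨e, hmem, hsource, htarget, he⟩ := exists_openPartialHomeomorph_hasDerivAt_of_continuous
    (k := K) hx₀ (hk.mono hball).domRestrict.Icc_extend' (hKk (mem_of_mem_nhds hx₀) ▸ hk₀)
  exact ⟨e, hmem, hsource.trans hball, htarget, fun x hx => hKk (hsource hx) ▸ he x hx⟩

variable {E : Type*} [NormedAddCommGroup E] [NormedSpace ℝ E] {F U : Set E} {V : E → E} {T : Set ℝ}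
  {σ : E → ℝ} {c : ℝ → E} {g : E → ℝ} {p : E}

theorem IsFlowBox.exists_of_smul (hb : IsFlowBox F (fun q => g q • V q) U T σ c)
    (hg : ContinuousOn g (U ∩ F)) (hp : p ∈ U ∩ F) :
    ∃ U T σ c, p ∈ U ∧ IsFlowBox F V U T σ c := by
  have hscale : ∀ q ∈ U ∩ F, ∃ σ' : E →L[ℝ] ℝ, HasFDerivAt σ σ' q ∧ g q * σ' (V q) = 1 := by
    simpa using hb.hasFDerivAt_time
  have hg₀ : ∀ q ∈ U ∩ F, g q ≠ 0 := fun q hq => by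
    obtain ⟨σ', -, h⟩ := hscale q hq
    exact left_ne_zero_of_mul (h.trans_ne one_ne_zero)
  have hcp := hb.curve_time p hp
  have hT := hb.time_mem p hp
  have hN : T ∩ c ⁻¹' U ∈ 𝓝 (σ p) := inter_mem (hb.isOpen.mem_nhds hT)
    ((hb.hasDerivAt _ hT).continuousAt.preimage_mem_nhds
      (hb.isOpen_domain.mem_nhds (hcp.symm ▸ hp.1)))
  have hmaps : MapsTo c (T ∩ c ⁻¹' U) (U ∩ F) := fun x hx => ⟨hx.2, hb.mapsTo hx.1⟩
  obtain ⟨e, hpe, heN, heT, he⟩ := exists_openPartialHomeomorph_hasDerivAt hN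
    (hg.comp (hb.continuousOn.mono inter_subset_left) hmaps) (hg₀ _ (hcp.symm ▸ hp))
  refine ⟨U ∩ interior (σ ⁻¹' e.source), e.target, e ∘ σ, c ∘ e.symm, ⟨hp.1, ?_⟩, ?_⟩
  · obtain ⟨σ', hσ', -⟩ := hscale p hp
    exact mem_interior_iff_mem_nhds.2
      (hσ'.continuousAt.preimage_mem_nhds (e.open_source.mem_nhds hpe))
  have hsource {q : E} (hq : q ∈ U ∩ interior (σ ⁻¹' e.source) ∩ F) : σ q ∈ e.source :=
    interior_subset (s := σ ⁻¹' e.source) hq.1.2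
  refine ⟨⟨e.open_target, heT, fun t ht => hb.mapsTo (heN (e.map_target ht)).1, fun t ht => ?_⟩,
    hb.isOpen_domain.inter isOpen_interior, fun q hq => e.map_source (hsource hq), fun q hq => ?_,
    fun q hq => ?_⟩
  · have hx := heN (e.map_target ht)
    have hgx := hg₀ _ (hmaps hx)
    have := (hb.hasDerivAt _ hx.1).scomp t (e.hasDerivAt_symm ht hgx (he _ (e.map_target ht)))
    rwa [smul_smul, inv_mul_cancel₀ hgx, one_smul] at this
  · simp [e.left_inv (hsource hq), hb.curve_time q ⟨hq.1.1, hq.2⟩]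
  · obtain ⟨σ', hσ', h⟩ := hscale q ⟨hq.1.1, hq.2⟩
    refine ⟨_, (he _ (hsource hq)).comp_hasFDerivAt q hσ', ?_⟩
    simpa [hb.curve_time q ⟨hq.1.1, hq.2⟩] using h

theorem exists_continuousLinearEquiv_eq_prod (hE : Module.finrank ℝ E = 2) {f s : E →L[ℝ] ℝ} {w : E}
    (hf : f ≠ 0) (hfw : f w = 0) (hsw : s w ≠ 0) :
    ∃ e : E ≃L[ℝ] ℝ × ℝ, (e : E →L[ℝ] ℝ × ℝ) = f.prod s := by
  have : FiniteDimensional ℝ E := .of_finrank_pos (by omega)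
  have hsurj : Function.Surjective (f.prod s) := by
    rintro ⟨a, b⟩
    obtain ⟨z, rfl⟩ := LinearMap.surjective (fun h => hf (ContinuousLinearMap.coe_injective h)) a
    exact ⟨z + ((b - s z) / s w) • w, by simp [hfw, hsw]⟩
  have hinj : Function.Injective (f.prod s) :=
    (LinearMap.injective_iff_surjective_of_finrank_eq_finrank (f := (f.prod s : E →ₗ[ℝ] ℝ × ℝ))
      (by simp [hE])).2 hsurj
  exact ⟨(LinearEquiv.ofBijective (f.prod s : E →ₗ[ℝ] ℝ × ℝ)
    ⟨hinj, hsurj⟩).toContinuousLinearEquiv, rfl⟩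

theorem exists_openPartialHomeomorph_eq_prod (hE : Module.finrank ℝ E = 2) {f : E → ℝ}
    (hf : ContDiffAt ℝ 1 f p) (hf' : fderiv ℝ f p ≠ 0) {s : E →L[ℝ] ℝ} {w : E}
    (hfw : fderiv ℝ f p w = 0) (hsw : s w ≠ 0) :
    ∃ Φ : OpenPartialHomeomorph E (ℝ × ℝ), p ∈ Φ.source ∧ (∀ q, Φ q = (f q, s q)) ∧
      ∀ q ∈ Φ.source, ∀ z, fderiv ℝ f q z = 0 → s z = 1 →
        HasDerivAt (fun x => Φ.symm (f q, x)) z (s q) := by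
  have : FiniteDimensional ℝ E := .of_finrank_pos (by omega)
  obtain ⟨φ', hφ'⟩ := exists_continuousLinearEquiv_eq_prod hE hf' hfw hsw
  have hprod {q : E} (hq : ContDiffAt ℝ 1 f q) :
      fderiv ℝ (fun q => (f q, s q)) q = (fderiv ℝ f q).prod s :=
    ((hq.differentiableAt one_ne_zero).hasFDerivAt.prodMk s.hasFDerivAt).fderiv
  obtain ⟨Φ, hpΦ, hΦ, hderiv⟩ := exists_openPartialHomeomorph_hasFDerivAt_symm
    (hf.prodMk s.contDiff.contDiffAt) ((hprod hf).trans hφ'.symm)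
  obtain ⟨W, hW, hWo, hpW⟩ := _root_.eventually_nhds_iff.1 (hf.eventually (by simp))
  refine ⟨Φ.restrOpen W hWo, ⟨hpΦ, hpW⟩, congrFun hΦ, fun q hq z hfz hsz => ?_⟩
  obtain ⟨e, he, hsymm⟩ := hderiv q hq.1
  have hz : e.symm (0, 1) = z := by
    rw [e.symm_apply_eq, ← e.coe_coe, ← he, hprod (hW q hq.2), ContinuousLinearMap.prod_apply, hfz,
      hsz]
  exact hz ▸ hsymm.comp_hasDerivAt (s q) ((hasDerivAt_const _ (f q)).prodMk (hasDerivAt_id (s q)))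

theorem exists_isFlowBox_level (hE : Module.finrank ℝ E = 2) {f : E → ℝ}
    (hf : ContDiffAt ℝ 1 f p) (hf' : fderiv ℝ f p ≠ 0) (hF : ∀ᶠ q in 𝓝 p, q ∈ F ↔ f q = 0)
    (hp : p ∈ F) (hV : ContinuousOn V F) (hVf : ∀ᶠ q in 𝓝 p, q ∈ F → fderiv ℝ f q (V q) = 0)
    {s : E →L[ℝ] ℝ} (hs : s (V p) ≠ 0) :
    ∃ U T c, p ∈ U ∧ (∀ q ∈ U ∩ F, s (V q) ≠ 0) ∧
      IsFlowBox F (fun q => (s (V q))⁻¹ • V q) U T s c := by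
  obtain ⟨Φ, hpΦ, hΦ, hderiv⟩ :=
    exists_openPartialHomeomorph_eq_prod hE hf hf' (hVf.self_of_nhds hp) hs
  have hsV : ∀ᶠ q in 𝓝 p, q ∈ F → s (V q) ≠ 0 := eventually_nhdsWithin_iff.1
    ((s.continuous.continuousAt.comp_continuousWithinAt (hV p hp)).eventually_ne hs)
  obtain ⟨U, hU, hUo, hpU⟩ := _root_.eventually_nhds_iff.1
    (hF.and (hVf.and (hsV.and (Φ.open_source.eventually_mem hpΦ))))
  have hΦF {q : E} (hq : q ∈ U ∩ F) : Φ q = (0, s q) := by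
    rw [hΦ, (hU q hq.1).1.1 hq.2]
  obtain ⟨r, hr, hball⟩ : ∃ r > 0, ball (s p) r ⊆ {x | (0, x) ∈ Φ.target ∩ Φ.symm ⁻¹' U} := by
    refine Metric.isOpen_iff.1 ((Φ.isOpen_inter_preimage_symm hUo).preimage
      (Continuous.prodMk_right 0)) _ ?_
    rw [mem_preimage, ← hΦF ⟨hpU, hp⟩]
    exact ⟨Φ.map_source hpΦ, by rwa [mem_preimage, Φ.left_inv hpΦ]⟩
  have hright {x : ℝ} (hx : x ∈ ball (s p) r) :
      f (Φ.symm (0, x)) = 0 ∧ s (Φ.symm (0, x)) = x := by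
    simpa [hΦ] using Φ.right_inv (hball hx).1
  have hmem {x : ℝ} (hx : x ∈ ball (s p) r) : Φ.symm (0, x) ∈ F :=
    (hU _ (hball hx).2).1.2 (hright hx).1
  refine ⟨U ∩ s ⁻¹' ball (s p) r, ball (s p) r, fun x => Φ.symm (0, x), ⟨hpU, mem_ball_self hr⟩,
    fun q hq => (hU q hq.1.1).2.2.1 hq.2,
    ⟨isOpen_ball, (convex_ball _ _).ordConnected, fun x hx => hmem hx, fun x hx => ?_⟩,
    hUo.inter (isOpen_ball.preimage s.continuous), fun q hq => hq.1.2, fun q hq => ?_,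
    fun q hq => ⟨s, s.hasFDerivAt, ?_⟩⟩
  · obtain ⟨-, hVq, hsq, hqΦ⟩ := hU _ (hball hx).2
    have := hderiv _ hqΦ ((s (V (Φ.symm (0, x))))⁻¹ • V (Φ.symm (0, x)))
      (by simp [hVq (hmem hx)]) (by simp [hsq (hmem hx)])
    rwa [(hright hx).1, (hright hx).2] at this
  · exact hΦF ⟨hq.1.1, hq.2⟩ ▸ Φ.left_inv (hU q hq.1.1).2.2.2
  · simp [(hU q hq.1.1).2.2.1 hq.2]

theorem exists_isFlowBox_of_level (hE : Module.finrank ℝ E = 2) {f : E → ℝ}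
    (hf : ContDiffAt ℝ 1 f p) (hf' : fderiv ℝ f p ≠ 0) (hF : ∀ᶠ q in 𝓝 p, q ∈ F ↔ f q = 0)
    (hp : p ∈ F) (hV : ContinuousOn V F) (hVp : V p ≠ 0)
    (hVf : ∀ᶠ q in 𝓝 p, q ∈ F → fderiv ℝ f q (V q) = 0) :
    ∃ U T σ c, p ∈ U ∧ IsFlowBox F V U T σ c := by
  obtain ⟨s, hs⟩ := SeparatingDual.exists_ne_zero (R := ℝ) hVp
  obtain ⟨U, T, c, hpU, hsV, hb⟩ := exists_isFlowBox_level hE hf hf' hF hp hV hVf hs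
  exact hb.exists_of_smul ((s.continuous.comp_continuousOn (hV.mono inter_subset_right)).inv₀ hsV)
    ⟨hpU, hp⟩

end FlowBox

section FixedPoints

variable {τ v : ℂ → ℂ} {D : Set ℂ}

/-- A continuous vector field on `D` which is tangent to the fixed-point set of `τ`: at a fixed
point `q` it symmetrizes the tangent vector `I * v q` under the linear involution `fderiv ℝ τ q`. -/
noncomputable def tangentField (τ v : ℂ → ℂ) (q : ℂ) : ℂ :=
  Complex.I * v q + fderiv ℝ τ q (Complex.I * v q)

theorem IsReversingInvolution.continuousOn_tangentField (hτ : IsReversingInvolution τ D)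
    (hD : IsOpen D) (hvc : ContinuousOn v D) : ContinuousOn (tangentField τ v) D :=
  (hvc.const_mul _).add ((hτ.continuousOn_fderiv hD).clm_apply (hvc.const_mul _))

theorem IsReversingInvolution.fderiv_displacement_tangentField
    (hτ : IsReversingInvolution τ D) (hD : IsOpen D) (n : ℂ) {q : ℂ} (hq : q ∈ D)
    (hfix : τ q = q) : fderiv ℝ (displacement τ n) q (tangentField τ v q) = 0 := by
  have : fderiv ℝ τ q (tangentField τ v q) = tangentField τ v q := by
    rw [tangentField, map_add, hτ.fderiv_fderiv_apply hD hq hfix, add_comm]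
  rw [hτ.fderiv_displacement hD n hq, this, sub_self, inner_zero_right]

theorem IsNormalField.tangentField_ne_zero (hv : IsNormalField τ D v)
    (hτ : IsReversingInvolution τ D) {q : ℂ} (hq : q ∈ D) (hfix : τ q = q) :
    tangentField τ v q ≠ 0 :=
  norm_pos_iff.1 (zero_lt_one.trans_le (one_le_norm_I_mul_add _ (hv.norm_eq q hq)
    (hv.fderiv_apply q hq hfix) (hτ.det_neg q hq)))

theorem IsNormalField.hasFlowBoxes (hv : IsNormalField τ D v) (hτ : IsReversingInvolution τ D)
    (hD : IsOpen D) (hvc : ContinuousOn v D) :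
    HasFlowBoxes {p ∈ D | τ p = p} (tangentField τ v) := by
  rintro p ⟨hp, hfix⟩
  have hlevel : ∀ᶠ q in 𝓝 p, q ∈ {p ∈ D | τ p = p} ↔ displacement τ (v p) q = 0 := by
    filter_upwards [hD.mem_nhds hp, hv.eventually_sign_displacement_eq hD hvc hp] with q hq hsign
    rw [and_iff_right hq, ← hv.height_eq_zero_iff hq, ← sign_eq_zero_iff, ← hsign,
      sign_eq_zero_iff]
  exact exists_isFlowBox_of_level Complex.finrank_real_complex
    (hτ.contDiffAt_displacement hD (v p) hp) (hv.fderiv_displacement_ne_zero hτ hD hp hfix) hlevel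
    ⟨hp, hfix⟩ ((hτ.continuousOn_tangentField hD hvc).mono (sep_subset _ _))
    (hv.tangentField_ne_zero hτ hp hfix)
    (.of_forall fun q hq => hτ.fderiv_displacement_tangentField hD _ hq.1 hq.2)

end FixedPoints

section SeparatingLine

variable {E : Type*} [NormedAddCommGroup E] [NormedSpace ℝ E]

/-- `F` is a connected embedded line, closed in `D`, whose complement in `D` is the disjoint union
of two connected open sides exchanged by `τ`. -/
structure IsSeparatingLine (τ : E → E) (D F : Set E) : Prop where
  isConnected : IsConnected F
  closure_inter_subset : closure F ∩ D ⊆ F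
  isEmbeddedLine : IsEmbeddedLine F
  exists_sides : ∃ A B, IsOpen A ∧ IsOpen B ∧ IsConnected A ∧ IsConnected B ∧ Disjoint A B ∧
    A ∪ B = D \ F ∧ τ '' A = B ∧ τ '' B = A

theorem IsReversingInvolution.isSeparatingLine {τ : ℂ → ℂ} {R : ℝ} (hR : 0 < R)
    (hτ : IsReversingInvolution τ (ball 0 R)) :
    IsSeparatingLine τ (ball 0 R) {p ∈ ball 0 R | τ p = p} := by
  have hsc : IsSimplyConnected (ball (0 : ℂ) R) := by
    have := (convex_ball (0 : ℂ) R).contractibleSpace (nonempty_ball.2 hR)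
    exact .ofContractible _
  have hτc := hτ.contDiffOn.continuousOn
  obtain ⟨v, hv, hvc, hvτ⟩ := hτ.exists_continuousOn_isNormalField isOpen_ball hsc
  have hfix := hτ.exists_fixedPoint isOpen_ball hsc
  have hconn : IsConnected {p ∈ ball 0 R | τ p = p} :=
    ⟨hfix, hv.isPreconnected_setOf_fixed hτ isOpen_ball hsc hvc hvτ⟩
  have hncpt : ¬IsCompact {p ∈ ball 0 R | τ p = p} := by
    have := not_isCompact_setOf_eq_zero_of_comp_eq_neg (by simp) hR hτc hτ.mapsTo
      hτ.involutive (hτ.continuousOn_height hvc) fun p hp => hτ.height_apply hvτ hp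
    rwa [show {p ∈ ball 0 R | τ p = p} = {p ∈ ball 0 R | height τ v p = 0} from
      Set.ext fun p => and_congr_right fun hp => (hv.height_eq_zero_iff hp).symm]
  exact ⟨hconn, closure_setOf_fixed_inter_subset hτc,
    (hv.hasFlowBoxes hτ isOpen_ball hvc).isEmbeddedLine hconn hncpt
      ((hτ.continuousOn_tangentField isOpen_ball hvc).mono (sep_subset _ _))
      fun p hp => hv.tangentField_ne_zero hτ hp.1 hp.2,
    hv.exists_sides hτ isOpen_ball (convex_ball 0 R).isPreconnected hvc hvτ hfix⟩

end SeparatingLine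

section Conjugation

variable {E G : Type*} [NormedAddCommGroup E] [NormedSpace ℝ E] [NormedAddCommGroup G]
  [NormedSpace ℝ G] {τ : G → G} {D F : Set G}

theorem IsReversingInvolution.conj (hτ : IsReversingInvolution τ D) (hD : IsOpen D)
    (e : E ≃L[ℝ] G) : IsReversingInvolution (e.symm ∘ τ ∘ e) (e ⁻¹' D) where
  contDiffOn :=
    e.symm.contDiff.comp_contDiffOn (hτ.contDiffOn.comp e.contDiff.contDiffOn fun _ hp => hp)
  mapsTo p hp := by simpa using hτ.mapsTo hp
  involutive p hp := by simp [hτ.involutive _ hp]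
  det_neg p hp := by
    have := e.symm.hasFDerivAt.comp p
      ((hτ.hasStrictFDerivAt hD hp).hasFDerivAt.comp p e.hasFDerivAt)
    rw [this.fderiv]
    exact (LinearMap.det_conj _ e.symm.toLinearEquiv).trans_lt (hτ.det_neg _ hp)

theorem preimage_setOf_fixed (τ : G → G) (D : Set G) (e : E ≃L[ℝ] G) :
    e ⁻¹' {p ∈ D | τ p = p} = {p ∈ e ⁻¹' D | (e.symm ∘ τ ∘ e) p = p} := by
  ext p
  simp [e.symm_apply_eq]

theorem IsEmbeddedLine.image {s : Set E} (hs : IsEmbeddedLine s) (e : E ≃L[ℝ] G) :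
    IsEmbeddedLine (e '' s) := by
  obtain ⟨γ, hγ, hγ', hemb, rfl⟩ := hs
  refine ⟨e ∘ γ, e.contDiff.comp hγ, fun t => ?_, e.toHomeomorph.isEmbedding.comp hemb,
    range_comp e γ⟩
  have := (hγ.differentiable one_ne_zero t).hasDerivAt
  rw [(e.hasFDerivAt.comp_hasDerivAt t this).deriv]
  exact e.map_eq_zero_iff.not.2 (hγ' t)

theorem IsSeparatingLine.of_conj {e : E ≃L[ℝ] G}
    (h : IsSeparatingLine (e.symm ∘ τ ∘ e) (e ⁻¹' D) (e ⁻¹' F)) : IsSeparatingLine τ D F := by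
  obtain ⟨A, B, hA, hB, hA', hB', hdisj, hunion, hAB, hBA⟩ := h.exists_sides
  have himage (s : Set G) : e '' (e ⁻¹' s) = s := image_preimage_eq s e.surjective
  have hconj (s : Set E) : τ '' (e '' s) = e '' ((e.symm ∘ τ ∘ e) '' s) := by
    simp [image_image]
  refine ⟨himage F ▸ h.isConnected.image e e.continuous.continuousOn, ?_,
    himage F ▸ h.isEmbeddedLine.image e, e '' A, e '' B, e.toHomeomorph.isOpenMap A hA,
    e.toHomeomorph.isOpenMap B hB, hA'.image e e.continuous.continuousOn,
    hB'.image e e.continuous.continuousOn, (disjoint_image_iff e.injective).2 hdisj, ?_,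
    by rw [hconj, hAB], by rw [hconj, hBA]⟩
  · have := h.closure_inter_subset
    rwa [← e.preimage_closure, ← preimage_inter, e.surjective.preimage_subset_preimage_iff] at this
  · rw [← image_union, hunion, image_sdiff e.injective, himage, himage]

end Conjugation

end ReversingInvolution

/-- **Proposition 4.2.** The fixed point set of an orientation-reversing C¹
diffeomorphism involution `τ` of the open unit disk `D ⊂ ℝ²` is a nonempty,
connected, closed (in `D`) one-dimensional C¹ submanifold of `D` homeomorphic
to `ℝ` (a single arc), and `D \ F` consists of exactly two connected
components which are interchanged by `τ`. -/
theorem fixed_point_set_of_orientation_reversing_involution_is_arc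
    (τ : EuclideanSpace ℝ (Fin 2) → EuclideanSpace ℝ (Fin 2))
    (D : Set (EuclideanSpace ℝ (Fin 2))) (hD : D = Metric.ball 0 1)
    (hsmooth : ContDiffOn ℝ 1 τ D)
    (hmaps : Set.MapsTo τ D D)
    (hinv : ∀ p ∈ D, τ (τ p) = p)
    (horient : ∀ p ∈ D, (fderiv ℝ τ p).det < 0)
    (F : Set (EuclideanSpace ℝ (Fin 2))) (hF : F = {p ∈ D | τ p = p}) :
    F.Nonempty ∧ IsConnected F ∧ closure F ∩ D ⊆ F ∧
    (∃ γ : ℝ → EuclideanSpace ℝ (Fin 2),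
      ContDiff ℝ 1 γ ∧ (∀ t : ℝ, deriv γ t ≠ 0) ∧
      Topology.IsEmbedding γ ∧ Set.range γ = F) ∧
    (∃ A B : Set (EuclideanSpace ℝ (Fin 2)),
      IsOpen A ∧ IsOpen B ∧ IsConnected A ∧ IsConnected B ∧
      Disjoint A B ∧ A ∪ B = D \ F ∧ τ '' A = B ∧ τ '' B = A) := by
  subst hD hF
  let e : ℂ ≃L[ℝ] EuclideanSpace ℝ (Fin 2) :=
    Complex.orthonormalBasisOneI.repr.toContinuousLinearEquiv
  have hball : e ⁻¹' ball 0 1 = ball 0 1 := by simp [e]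
  have hτ : ReversingInvolution.IsReversingInvolution τ (ball 0 1) :=
    ⟨hsmooth, hmaps, hinv, horient⟩
  have hline : ReversingInvolution.IsSeparatingLine (e.symm ∘ τ ∘ e) (e ⁻¹' ball 0 1)
      (e ⁻¹' {p ∈ ball 0 1 | τ p = p}) := by
    rw [ReversingInvolution.preimage_setOf_fixed, hball]
    exact (hball ▸ hτ.conj isOpen_ball e).isSeparatingLine one_pos
  obtain ⟨hconn, hclosed, harc, hsides⟩ := hline.of_conj
  exact ⟨hconn.nonempty, hconn, hclosed, harc, hsides⟩
end

section
/- Under these hypotheses, G has no critical points off the real axis: if z ∈ Ω \ E and Im z ≠ 0, then the derivative of G at z is nonzero. -/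
open Metric Set Complex

/-- A real-valued function is harmonic on an open subset of `ℂ ≅ ℝ²` if it is
C² there and its Laplacian vanishes. -/
def IsHarmonicOn (G : ℂ → ℝ) (U : Set ℂ) : Prop :=
  ContDiffOn ℝ 2 G U ∧ ∀ z ∈ U,
    fderiv ℝ (fun w => fderiv ℝ G w 1) z 1 +
      fderiv ℝ (fun w => fderiv ℝ G w Complex.I) z Complex.I = 0

/-!
Conjugation is a hyperbolic isometry of `Ω`, so real points of `Ω` are equidistant from a non-real
`z₀` and `conj z₀`. Under a Riemann map sending `z₀` to `0` they land on a hyperbolic geodesic of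
the unit disc that misses `0`, and after a rotation the image of `E` lies above the real diameter.
For the transplanted potential `G`, the maximum principle shows that `G z - G (conj z)`, which is
odd under conjugation, is nonnegative in the lower half disc. By Hopf's lemma its derivative at `0`
is nonzero unless it vanishes identically; since `E` lies strictly on one side, it does not.
-/

open Filter Topology InnerProductSpace
open scoped ComplexConjugate

/-! ### Locally uniform limits of holomorphic functions -/

theorem tendstoLocallyUniformlyOn_of_equicontinuousAt {ι X α : Type*} [TopologicalSpace X]
    [PseudoMetricSpace α] {F : ι → X → α} {f : X → α} {l : Filter ι} [l.NeBot] {U : Set X}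
    (hF : ∀ x ∈ U, EquicontinuousAt F x) (hf : ∀ x ∈ U, Tendsto (F · x) l (𝓝 (f x))) :
    TendstoLocallyUniformlyOn F f l U := by
  refine Metric.tendstoLocallyUniformlyOn_iff.2 fun ε hε x hx => ?_
  have hclose := Metric.equicontinuousAt_iff_right.1 (hF x hx) (ε / 3) (by positivity)
  refine ⟨_, inter_mem self_mem_nhdsWithin (nhdsWithin_le_nhds hclose), ?_⟩
  filter_upwards [Metric.tendsto_nhds.1 (hf x hx) (ε / 3) (by positivity)] with i hi y ⟨hyU, hy⟩
  have hlim : dist (f x) (f y) ≤ ε / 3 :=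
    le_of_tendsto ((hf x hx).dist (hf y hyU)) (.of_forall fun j => (hy j).le)
  have hyi : dist (F i x) (F i y) < ε / 3 := hy i
  have := dist_triangle4 (f y) (f x) (F i x) (F i y)
  rw [dist_comm (f y) (f x), dist_comm (f x) (F i x)] at this
  linarith

theorem equicontinuousAt_of_mapsTo_closedBall {ι : Type*} {F : ι → ℂ → ℂ} {U : Set ℂ}
    (hU : IsOpen U) {M : ℝ} (hd : ∀ i, DifferentiableOn ℂ (F i) U)
    (hM : ∀ i, MapsTo (F i) U (closedBall 0 M)) {z : ℂ} (hz : z ∈ U) :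
    EquicontinuousAt F z := by
  obtain ⟨r, hr, hball⟩ := Metric.isOpen_iff.1 hU z hz
  refine Metric.equicontinuousAt_of_continuity_modulus (fun w => 2 * M / r * dist w z) ?_ F ?_
  · have : Continuous fun w => 2 * M / r * dist w z := by fun_prop
    simpa using this.tendsto z
  · filter_upwards [ball_mem_nhds z hr] with w hw i
    rw [dist_comm]
    refine dist_le_div_mul_dist_of_mapsTo_ball ((hd i).mono hball) (fun u hu => ?_) hw
    have := dist_triangle_right (F i u) (F i z) 0
    have := mem_closedBall.1 (hM i (hball hu))
    have := mem_closedBall.1 (hM i hz)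
    rw [mem_closedBall]
    linarith

theorem exists_tendstoLocallyUniformlyOn_ultrafilter {ι : Type*} {F : ι → ℂ → ℂ} {U : Set ℂ}
    (hU : IsOpen U) {M : ℝ} (hd : ∀ i, DifferentiableOn ℂ (F i) U)
    (hM : ∀ i, MapsTo (F i) U (closedBall 0 M)) (l : Ultrafilter ι) :
    ∃ f : ℂ → ℂ, MapsTo f U (closedBall 0 M) ∧ TendstoLocallyUniformlyOn F f l U := by
  have hlim : ∀ z : ℂ, ∃ w, z ∈ U → w ∈ closedBall (0 : ℂ) M ∧ Tendsto (F · z) l (𝓝 w) := by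
    intro z
    by_cases hz : z ∈ U
    · obtain ⟨w, hwM, hw⟩ := (isCompact_closedBall (0 : ℂ) M).ultrafilter_le_nhds
        (l.map (F · z)) (tendsto_principal.2 (.of_forall fun i => hM i hz))
      exact ⟨w, fun _ => ⟨hwM, hw⟩⟩
    · exact ⟨0, fun h => absurd h hz⟩
  choose f hf using hlim
  exact ⟨f, fun z hz => (hf z hz).1, tendstoLocallyUniformlyOn_of_equicontinuousAt
    (fun z hz => equicontinuousAt_of_mapsTo_closedBall hU hd hM hz) fun z hz => (hf z hz).2⟩

theorem exists_sphere_le_dist {f : ℂ → ℂ} {b : ℂ} (hf : AnalyticAt ℂ f b)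
    (hne : ∃ᶠ z in 𝓝 b, f z ≠ f b) {R : ℝ} (hR : 0 < R) :
    ∃ r ∈ Ioo 0 R, ∃ ε > 0, ∀ z ∈ sphere b r, ε ≤ dist (f z) (f b) := by
  have hpunct : ∀ᶠ z in 𝓝[≠] b, f z - f b ≠ 0 :=
    (hf.sub analyticAt_const).eventually_eq_zero_or_eventually_ne_zero.resolve_left
      fun h => hne (h.mono fun z hz => not_not.2 (sub_eq_zero.1 hz))
  obtain ⟨δ, hδ, hδs⟩ := Metric.eventually_nhds_iff_ball.1
    ((eventually_nhdsWithin_iff.1 hpunct).and hf.eventually_analyticAt)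
  set r := min δ R / 2
  have hr : 0 < r := by positivity
  have hrδ : r < δ := (half_lt_self (lt_min hδ hR)).trans_le (min_le_left _ _)
  have hrR : r < R := (half_lt_self (lt_min hδ hR)).trans_le (min_le_right _ _)
  have hsub : sphere b r ⊆ ball b δ := sphere_subset_closedBall.trans (closedBall_subset_ball hrδ)
  have hcont : ContinuousOn (fun z => dist (f z) (f b)) (sphere b r) := fun z hz =>
    (hδs z (hsub hz)).2.continuousAt.continuousWithinAt.dist continuousWithinAt_const
  obtain ⟨m, hm, hmin⟩ := (isCompact_sphere b r).exists_isMinOn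
    (NormedSpace.sphere_nonempty.2 hr.le) hcont
  have hfm : f m ≠ f b := sub_ne_zero.1 ((hδs m (hsub hm)).1 (ne_of_mem_sphere hm hr.ne'))
  exact ⟨r, ⟨hr, hrR⟩, _, dist_pos.2 hfm, fun z hz => hmin hz⟩

theorem ball_subset_image_closedBall_of_dist_lt {f g : ℂ → ℂ} {b : ℂ} {r ε : ℝ} (hr : 0 < r)
    (hf : ∀ z ∈ sphere b r, ε ≤ dist (f z) (f b)) (hg : DiffContOnCl ℂ g (ball b r))
    (hne : ∃ᶠ z in 𝓝 b, g z ≠ g b) (hfg : ∀ z ∈ closedBall b r, dist (f z) (g z) < ε / 8) :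
    ball (f b) (ε / 8) ⊆ g '' closedBall b r := by
  have hb := hfg b (mem_closedBall_self hr.le)
  have hfar : ∀ z ∈ sphere b r, ε / 2 ≤ ‖g z - g b‖ := fun z hz => by
    have := hf z hz
    have := hfg z (sphere_subset_closedBall hz)
    have := dist_triangle4_right (f z) (f b) (g z) (g b)
    have := dist_nonneg (x := f b) (y := g b)
    rw [← dist_eq_norm]
    linarith
  refine (ball_subset_ball' ?_).trans (hg.ball_subset_image_closedBall hr hfar hne)
  linarith

theorem injOn_of_tendstoLocallyUniformlyOn {ι : Type*} {l : Filter ι} [l.NeBot] {F : ι → ℂ → ℂ}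
    {f : ℂ → ℂ} {U : Set ℂ} (hU : IsOpen U) (hd : ∀ i, DifferentiableOn ℂ (F i) U)
    (hinj : ∀ i, InjOn (F i) U) (hlim : TendstoLocallyUniformlyOn F f l U)
    (hne : ∀ z ∈ U, ∃ᶠ w in 𝓝 z, f w ≠ f z) : InjOn f U := by
  intro a ha b hb hab
  by_contra hne_ab
  obtain ⟨R, hR, hball⟩ := Metric.isOpen_iff.1 hU b hb
  have hfb : AnalyticAt ℂ f b :=
    (hlim.differentiableOn (.of_forall hd) hU).analyticAt (hU.mem_nhds hb)
  obtain ⟨r, ⟨hr, hrR⟩, ε, hε, hsphere⟩ := exists_sphere_le_dist hfb (hne b hb)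
    (lt_min hR (dist_pos.2 hne_ab))
  have hsub : closedBall b r ⊆ U :=
    (closedBall_subset_ball (hrR.trans_le (min_le_left _ _))).trans hball
  have hunif := Metric.tendstoUniformlyOn_iff.1
    ((tendstoLocallyUniformlyOn_iff_forall_isCompact hU).1 hlim _ hsub (isCompact_closedBall b r))
    (ε / 8) (by positivity)
  have hnear := Metric.tendsto_nhds.1 (hlim.tendsto_at ha) (ε / 8) (by positivity)
  obtain ⟨i, hi, hia⟩ := (hunif.and hnear).exists
  have hnonconst : ∃ᶠ z in 𝓝 b, F i z ≠ F i b := by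
    refine Frequently.filter_mono (Eventually.frequently ?_) (nhdsWithin_le_nhds (s := {b}ᶜ))
    filter_upwards [self_mem_nhdsWithin, nhdsWithin_le_nhds (hU.mem_nhds hb)] with z hz hzU h
    exact hz (hinj i hzU hb h)
  obtain ⟨c, hc, hca⟩ := ball_subset_image_closedBall_of_dist_lt hr hsphere
    ((hd i).mono (closure_ball b hr.ne' ▸ hsub)).diffContOnCl hnonconst hi
    (hab ▸ mem_ball.2 hia)
  have : c = a := hinj i (hsub hc) ha hca
  rw [this, mem_closedBall] at hc
  exact (hrR.trans_le (min_le_right _ _)).not_ge hc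

theorem exists_differentiableOn_sq_eq {U : Set ℂ} (hU : IsOpen U) (hsc : IsSimplyConnected U)
    {g : ℂ → ℂ} (hg : DifferentiableOn ℂ g U) (hg0 : ∀ z ∈ U, g z ≠ 0) :
    ∃ s : ℂ → ℂ, DifferentiableOn ℂ s U ∧ ∀ z, s z ^ 2 = g z := by
  obtain ⟨s, hsc, hs⟩ := exists_continuousOn_pow_eq hsc hU hg.continuousOn
    (fun ⟨z, hz, h⟩ => hg0 z hz h) two_ne_zero
  refine ⟨s, fun z hz => DifferentiableAt.differentiableWithinAt ?_, hs⟩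
  have hsz : s z ≠ 0 := fun h => hg0 z hz (by rw [← hs, h, zero_pow two_ne_zero])
  have hquot : ContinuousAt (fun w => s w / s z) z :=
    (hsc.continuousAt (hU.mem_nhds hz)).div_const _
  have hre : ∀ᶠ w in 𝓝 z, 0 < (s w / s z).re :=
    (continuous_re.continuousAt.comp hquot).eventually_const_lt (by simp [hsz])
  have hlocal : s =ᶠ[𝓝 z] fun w => s z * (g w / g z) ^ (2⁻¹ : ℂ) := by
    filter_upwards [hre] with w hw
    rw [← hs w, ← hs z, ← div_pow, sq_cpow_two_inv hw, mul_div_cancel₀ _ hsz]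
  refine DifferentiableAt.congr_of_eventuallyEq ?_ hlocal
  have hgz : DifferentiableAt ℂ (fun w => g w / g z) z :=
    (hg.differentiableAt (hU.mem_nhds hz)).div_const _
  exact (hgz.cpow_const (by simp [hg0 z hz])).const_mul _

/-! ### Injective holomorphic functions and automorphisms of the disc -/

theorem nhds_le_map_nhds_of_injOn {f : ℂ → ℂ} {U : Set ℂ} {z : ℂ} (hU : U ∈ 𝓝 z)
    (hf : AnalyticAt ℂ f z) (hinj : InjOn f U) : 𝓝 (f z) ≤ map f (𝓝 z) := by
  refine hf.eventually_constant_or_nhds_le_map_nhds.resolve_left fun hconst => ?_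
  obtain ⟨w, ⟨hwz, hwU⟩, hw⟩ := ((hconst.and hU).filter_mono nhdsWithin_le_nhds |>.and
    (self_mem_nhdsWithin (s := {z}ᶜ))).exists
  exact hw (hinj hwU (mem_of_mem_nhds hU) hwz)

theorem eventually_deriv_ne_zero_of_injOn {f : ℂ → ℂ} {U : Set ℂ} {z : ℂ} (hU : U ∈ 𝓝 z)
    (hf : AnalyticAt ℂ f z) (hinj : InjOn f U) : ∀ᶠ w in 𝓝[≠] z, deriv f w ≠ 0 := by
  refine hf.deriv.eventually_eq_zero_or_eventually_ne_zero.resolve_left fun hzero => ?_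
  obtain ⟨r, hr, hball⟩ := Metric.eventually_nhds_iff_ball.1
    ((hzero.and hf.eventually_analyticAt).and hU)
  have hconst : ∀ w ∈ ball z r, f w = f z := fun w hw =>
    (convex_ball z r).is_const_of_fderivWithin_eq_zero (𝕜 := ℂ)
      (fun u hu => (hball u hu).1.2.differentiableAt.differentiableWithinAt)
      (fun u hu => by
        rw [fderivWithin_of_isOpen isOpen_ball hu]
        ext
        simpa using (hball u hu).1.1) hw (mem_ball_self hr)
  obtain ⟨w, hwr, hwz⟩ := Filter.nonempty_of_mem (inter_mem
    (nhdsWithin_le_nhds (ball_mem_nhds z hr)) (self_mem_nhdsWithin (s := {z}ᶜ)))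
  exact hwz (hinj (hball w hwr).2 (mem_of_mem_nhds hU) (hconst w hwr))

theorem tendsto_nhds_of_leftInvOn {f g : ℂ → ℂ} {U : Set ℂ} {z : ℂ} (hU : U ∈ 𝓝 z)
    (hf : AnalyticAt ℂ f z) (hg : LeftInvOn g f U) : Tendsto g (𝓝 (f z)) (𝓝 z) :=
  calc map g (𝓝 (f z)) ≤ map g (map f (𝓝 z)) :=
        map_mono (nhds_le_map_nhds_of_injOn hU hf hg.injOn)
    _ ≤ 𝓝 z := tendsto_map'_iff.2
        (tendsto_id.congr' (eventually_of_mem hU fun _ hw => (hg hw).symm))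

theorem differentiableOn_image_of_leftInvOn {f g : ℂ → ℂ} {U : Set ℂ} (hU : IsOpen U)
    (hf : DifferentiableOn ℂ f U) (hg : LeftInvOn g f U) : DifferentiableOn ℂ g (f '' U) := by
  have hfan : ∀ z ∈ U, AnalyticAt ℂ f z := fun z hz => hf.analyticAt (hU.mem_nhds hz)
  have hright : ∀ z ∈ U, ∀ᶠ y in 𝓝 (f z), g y ∈ U ∧ f (g y) = y := fun z hz =>
    nhds_le_map_nhds_of_injOn (hU.mem_nhds hz) (hfan z hz) hg.injOn
      (mem_map.2 (mem_of_superset (hU.mem_nhds hz) fun w hw => by simp [hg hw, hw]))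
  have hcont : ∀ z ∈ U, Tendsto g (𝓝 (f z)) (𝓝 z) := fun z hz =>
    tendsto_nhds_of_leftInvOn (hU.mem_nhds hz) (hfan z hz) hg
  have hregular : ∀ z ∈ U, deriv f z ≠ 0 → DifferentiableAt ℂ g (f z) := fun z hz hderiv =>
    (HasDerivAt.of_local_left_inverse (f' := deriv f z)
      (by simpa [ContinuousAt, hg hz] using hcont z hz)
      (by simpa [hg hz] using (hfan z hz).differentiableAt.hasDerivAt) hderiv
      ((hright z hz).mono fun y hy => hy.2)).differentiableAt
  rintro _ ⟨z, hz, rfl⟩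
  refine (analyticAt_of_differentiable_on_punctured_nhds_of_continuousAt ?_
    (by simpa [ContinuousAt, hg hz] using hcont z hz)).differentiableAt.differentiableWithinAt
  have hpunct : Tendsto g (𝓝[≠] f z) (𝓝[≠] z) := by
    refine tendsto_nhdsWithin_iff.2 ⟨(hcont z hz).mono_left nhdsWithin_le_nhds, ?_⟩
    filter_upwards [nhdsWithin_le_nhds (hright z hz), self_mem_nhdsWithin] with y hy hne hgy
    exact hne (by rw [mem_singleton_iff, ← hy.2, hgy])
  filter_upwards [hpunct.eventually (eventually_deriv_ne_zero_of_injOn (hU.mem_nhds hz)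
    (hfan z hz) hg.injOn), nhdsWithin_le_nhds (hright z hz)] with y hderiv hy
  exact hy.2 ▸ hregular (g y) hy.1 hderiv

/-- The involutive automorphism of the unit disc exchanging `0` and `w`, used to move base points
in Koebe's square root trick and to measure hyperbolic distance to `w`; junk where the denominator
vanishes, which does not happen on the disc. -/
noncomputable def discInvolution (w u : ℂ) : ℂ := (w - u) / (1 - conj w * u)

theorem one_sub_conj_mul_ne_zero {w u : ℂ} (hw : ‖w‖ < 1) (hu : ‖u‖ ≤ 1) :
    1 - conj w * u ≠ 0 := by
  intro h
  have : ‖conj w * u‖ = 1 := by rw [← sub_eq_zero.1 h, norm_one]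
  rw [norm_mul, norm_conj] at this
  nlinarith [norm_nonneg w, norm_nonneg u]

theorem normSq_one_sub_conj_mul_sub (w u : ℂ) :
    normSq (1 - conj w * u) - normSq (w - u) = (1 - normSq w) * (1 - normSq u) := by
  simp only [normSq_apply, sub_re, sub_im, mul_re, mul_im, conj_re, conj_im, one_re, one_im]
  ring

theorem norm_discInvolution_lt_one {w u : ℂ} (hw : ‖w‖ < 1) (hu : ‖u‖ < 1) :
    ‖discInvolution w u‖ < 1 := by
  have hw' : normSq w < 1 := by rw [normSq_eq_norm_sq]; nlinarith [norm_nonneg w]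
  have hu' : normSq u < 1 := by rw [normSq_eq_norm_sq]; nlinarith [norm_nonneg u]
  rw [discInvolution, norm_div, div_lt_one (norm_pos_iff.2 (one_sub_conj_mul_ne_zero hw hu.le)),
    ← sq_lt_sq₀ (norm_nonneg _) (norm_nonneg _), ← normSq_eq_norm_sq, ← normSq_eq_norm_sq]
  nlinarith [normSq_one_sub_conj_mul_sub w u]

theorem mapsTo_discInvolution {w : ℂ} (hw : w ∈ ball (0 : ℂ) 1) :
    MapsTo (discInvolution w) (ball 0 1) (ball 0 1) := fun _ hu =>
  mem_ball_zero_iff.2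
    (norm_discInvolution_lt_one (mem_ball_zero_iff.1 hw) (mem_ball_zero_iff.1 hu))

@[simp]
theorem discInvolution_self (w : ℂ) : discInvolution w w = 0 := by simp [discInvolution]

@[simp]
theorem discInvolution_zero (w : ℂ) : discInvolution w 0 = w := by simp [discInvolution]

theorem hasDerivAt_discInvolution {w u : ℂ} (hw : ‖w‖ < 1) (hu : ‖u‖ < 1) :
    HasDerivAt (discInvolution w) ((‖w‖ ^ 2 - 1) / (1 - conj w * u) ^ 2) u := by
  have hden := one_sub_conj_mul_ne_zero hw hu.le
  have hnum : HasDerivAt (fun v => w - v) (-1) u := (hasDerivAt_id u).const_sub w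
  have hden' : HasDerivAt (fun v => 1 - conj w * v) (-conj w) u := by
    simpa using ((hasDerivAt_id u).const_mul (conj w)).const_sub 1
  refine (hnum.div hden' hden).congr_deriv ?_
  rw [← conj_mul']
  ring

theorem discInvolution_discInvolution {w u : ℂ} (hw : ‖w‖ < 1) (hu : ‖u‖ < 1) :
    discInvolution w (discInvolution w u) = u := by
  have hden := one_sub_conj_mul_ne_zero hw hu.le
  have hden' := one_sub_conj_mul_ne_zero hw (norm_discInvolution_lt_one hw hu).le
  unfold discInvolution at *
  rw [div_eq_iff hden']
  generalize hd : 1 - conj w * u = d at *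
  field_simp
  linear_combination (u - w) * hd

theorem injOn_discInvolution {w : ℂ} (hw : w ∈ ball (0 : ℂ) 1) :
    InjOn (discInvolution w) (ball 0 1) :=
  LeftInvOn.injOn (f₁' := discInvolution w) fun _ hu =>
    discInvolution_discInvolution (mem_ball_zero_iff.1 hw) (mem_ball_zero_iff.1 hu)

theorem differentiableOn_discInvolution {w : ℂ} (hw : w ∈ ball (0 : ℂ) 1) :
    DifferentiableOn ℂ (discInvolution w) (ball 0 1) := fun _ hu =>
  (hasDerivAt_discInvolution (mem_ball_zero_iff.1 hw)
    (mem_ball_zero_iff.1 hu)).differentiableAt.differentiableWithinAt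

/-! ### The Riemann mapping theorem -/

theorem frequently_ne_of_deriv_ne_zero {f : ℂ → ℂ} {U : Set ℂ} (hU : IsOpen U)
    (hUc : IsPreconnected U) (hf : DifferentiableOn ℂ f U) {z₀ : ℂ} (hz₀ : z₀ ∈ U)
    (hderiv : deriv f z₀ ≠ 0) {z : ℂ} (hz : z ∈ U) : ∃ᶠ w in 𝓝 z, f w ≠ f z := by
  intro hconst
  have heq : EqOn f (fun _ => f z) U :=
    (hf.analyticOnNhd hU).eqOn_of_preconnected_of_eventuallyEq analyticOnNhd_const hUc hz
      (hconst.mono fun w hw => not_not.1 hw)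
  refine hderiv ?_
  rw [(heq.eventuallyEq_of_mem (hU.mem_nhds hz₀)).deriv_eq, deriv_const]

theorem mapsTo_ball_of_mapsTo_closedBall {f : ℂ → ℂ} {U : Set ℂ} {c : ℂ} {r : ℝ} (hr : r ≠ 0)
    (hU : IsOpen U) (hf : DifferentiableOn ℂ f U) (hmaps : MapsTo f U (closedBall c r))
    (hne : ∀ z ∈ U, ∃ᶠ w in 𝓝 z, f w ≠ f z) : MapsTo f U (ball c r) := by
  intro z hz
  have hopen : f '' U ∈ 𝓝 (f z) :=
    ((hf.analyticAt (hU.mem_nhds hz)).eventually_constant_or_nhds_le_map_nhds.resolve_left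
      fun h => hne z hz (h.mono fun w hw => not_not.2 hw)) (image_mem_map (hU.mem_nhds hz))
  rw [← interior_closedBall c hr]
  exact mem_interior_iff_mem_nhds.2 (mem_of_superset hopen hmaps.image_subset)

/-- `f` is a univalent (injective holomorphic) map from `U` to the unit disc normalised by
`f z₀ = 0`: the class over which the Riemann map maximises `‖deriv f z₀‖`. -/
structure IsNormalizedUnivalent (U : Set ℂ) (z₀ : ℂ) (f : ℂ → ℂ) : Prop where
  differentiableOn : DifferentiableOn ℂ f U
  injOn : InjOn f U
  mapsTo : MapsTo f U (ball 0 1)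
  map_base : f z₀ = 0

namespace IsNormalizedUnivalent

variable {U : Set ℂ} {z₀ : ℂ}

theorem norm_deriv_le {f : ℂ → ℂ} (hf : IsNormalizedUnivalent U z₀ f) {r : ℝ} (hr : 0 < r)
    (hball : ball z₀ r ⊆ U) : ‖deriv f z₀‖ ≤ 1 / r :=
  norm_deriv_le_div_of_mapsTo_ball (hf.differentiableOn.mono hball)
    (hf.map_base ▸ (hf.mapsTo.mono hball ball_subset_closedBall)) hr

theorem exists_of_isBounded (hU : Bornology.IsBounded U) (z₀ : ℂ) :
    ∃ f, IsNormalizedUnivalent U z₀ f ∧ deriv f z₀ ≠ 0 := by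
  obtain ⟨R, hR, hball⟩ := hU.subset_ball_lt 0 z₀
  have hR' : (R : ℂ) ≠ 0 := mod_cast hR.ne'
  have hderiv : ∀ z, HasDerivAt (fun z => (z - z₀) / (R : ℂ)) (1 / R) z := fun z =>
    ((hasDerivAt_id z).sub_const z₀).div_const _
  refine ⟨fun z => (z - z₀) / R,
    ⟨fun z _ => (hderiv z).differentiableAt.differentiableWithinAt, ?_, ?_, by simp⟩, ?_⟩
  · exact fun z _ w _ h => sub_left_injective ((div_left_inj' hR').1 h)
  · intro z hz
    rw [mem_ball_zero_iff, norm_div, norm_real, Real.norm_of_nonneg hR.le, div_lt_one hR,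
      ← dist_eq_norm]
    exact hball hz
  · rw [(hderiv z₀).deriv]
    exact one_div_ne_zero hR'

theorem of_tendstoLocallyUniformlyOn {ι : Type*} {l : Filter ι} [l.NeBot] {F : ι → ℂ → ℂ}
    {f : ℂ → ℂ} (hU : IsOpen U) (hUc : IsPreconnected U) (hz₀ : z₀ ∈ U)
    (hF : ∀ i, IsNormalizedUnivalent U z₀ (F i)) (hlim : TendstoLocallyUniformlyOn F f l U)
    (hderiv : deriv f z₀ ≠ 0) : IsNormalizedUnivalent U z₀ f := by
  have hd := hlim.differentiableOn (.of_forall fun i => (hF i).differentiableOn) hU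
  have hne := fun z (hz : z ∈ U) => frequently_ne_of_deriv_ne_zero hU hUc hd hz₀ hderiv hz
  refine ⟨hd, injOn_of_tendstoLocallyUniformlyOn hU (fun i => (hF i).differentiableOn)
    (fun i => (hF i).injOn) hlim hne, mapsTo_ball_of_mapsTo_closedBall one_ne_zero hU hd
      (fun z hz => ?_) hne, ?_⟩
  · exact isClosed_closedBall.mem_of_tendsto (hlim.tendsto_at hz)
      (.of_forall fun i => ball_subset_closedBall ((hF i).mapsTo hz))
  · refine tendsto_nhds_unique (hlim.tendsto_at hz₀) ?_
    simp only [fun i => (hF i).map_base, tendsto_const_nhds]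

theorem exists_norm_deriv_max (hU : IsOpen U) (hUc : IsPreconnected U) (hz₀ : z₀ ∈ U)
    (hne : ∃ f, IsNormalizedUnivalent U z₀ f ∧ deriv f z₀ ≠ 0) :
    ∃ f, IsNormalizedUnivalent U z₀ f ∧ deriv f z₀ ≠ 0 ∧
      ∀ g, IsNormalizedUnivalent U z₀ g → ‖deriv g z₀‖ ≤ ‖deriv f z₀‖ := by
  obtain ⟨f₀, hf₀, hf₀'⟩ := hne
  obtain ⟨r, hr, hball⟩ := Metric.isOpen_iff.1 hU z₀ hz₀
  set S := (fun f : ℂ → ℂ => ‖deriv f z₀‖) '' {f | IsNormalizedUnivalent U z₀ f}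
  have hbdd : BddAbove S := ⟨1 / r, by rintro _ ⟨f, hf, rfl⟩; exact hf.norm_deriv_le hr hball⟩
  obtain ⟨u, -, hu, huS⟩ := exists_seq_tendsto_sSup (S := S) ⟨_, f₀, hf₀, rfl⟩ hbdd
  choose F hF hFu using huS
  obtain ⟨f, -, hlim⟩ := exists_tendstoLocallyUniformlyOn_ultrafilter hU
    (fun n => (hF n).differentiableOn)
    (fun n => (hF n).mapsTo.mono_right ball_subset_closedBall) (hyperfilter ℕ)
  have hderiv : ‖deriv f z₀‖ = sSup S := by
    have h := ((hlim.deriv (.of_forall fun n => (hF n).differentiableOn) hU).tendsto_at hz₀).norm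
    refine tendsto_nhds_unique h ((hu.mono_left Nat.hyperfilter_le_atTop).congr fun n => ?_)
    exact (hFu n).symm
  have hmax : ∀ g, IsNormalizedUnivalent U z₀ g → ‖deriv g z₀‖ ≤ ‖deriv f z₀‖ := fun g hg =>
    hderiv ▸ le_csSup hbdd ⟨g, hg, rfl⟩
  have hf' : deriv f z₀ ≠ 0 :=
    norm_pos_iff.1 ((norm_pos_iff.2 hf₀').trans_le (hmax f₀ hf₀))
  exact ⟨f, of_tendstoLocallyUniformlyOn hU hUc hz₀ hF hlim hf', hf', hmax⟩

end IsNormalizedUnivalent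

theorem norm_deriv_discInvolution_comp_self {s : ℂ → ℂ} {z₀ : ℂ} (hs : DifferentiableAt ℂ s z₀)
    (hc : ‖s z₀‖ < 1) :
    ‖deriv (discInvolution (s z₀) ∘ s) z₀‖ = ‖deriv s z₀‖ / (1 - ‖s z₀‖ ^ 2) := by
  have hpos : 0 < 1 - ‖s z₀‖ ^ 2 := by nlinarith [norm_nonneg (s z₀)]
  have hne : (1 : ℂ) - (‖s z₀‖ : ℂ) ^ 2 ≠ 0 := mod_cast hpos.ne'
  have hderiv : deriv (discInvolution (s z₀) ∘ s) z₀ =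
      -(deriv s z₀ / ((1 - ‖s z₀‖ ^ 2 : ℝ) : ℂ)) := by
    rw [((hasDerivAt_discInvolution hc hc).comp z₀ hs.hasDerivAt).deriv, conj_mul']
    push_cast
    field_simp
    ring
  rw [hderiv, norm_neg, norm_div, norm_real, Real.norm_of_nonneg hpos.le]

theorem norm_deriv_of_sq_eq_discInvolution_comp {f s : ℂ → ℂ} {w z₀ : ℂ} (hw : ‖w‖ < 1)
    (hf : DifferentiableAt ℂ f z₀) (hs : DifferentiableAt ℂ s z₀) (hf₀ : f z₀ = 0)
    (hsq : ∀ᶠ z in 𝓝 z₀, s z ^ 2 = discInvolution w (f z)) :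
    2 * ‖s z₀‖ * ‖deriv s z₀‖ = (1 - ‖s z₀‖ ^ 4) * ‖deriv f z₀‖ := by
  have hs₀ : ‖s z₀‖ ^ 2 = ‖w‖ := by rw [← norm_pow, hsq.self_of_nhds, hf₀, discInvolution_zero]
  have hleft : HasDerivAt (fun z => s z ^ 2) (2 * s z₀ * deriv s z₀) z₀ := by
    simpa using hs.hasDerivAt.fun_pow 2
  have hright : HasDerivAt (fun z => discInvolution w (f z)) ((‖w‖ ^ 2 - 1) * deriv f z₀) z₀ := by
    have h := hasDerivAt_discInvolution hw (u := f z₀) (by simp [hf₀])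
    simpa [hf₀, Function.comp_def] using h.comp z₀ hf.hasDerivAt
  have heq := congrArg norm (hleft.unique (hright.congr_of_eventuallyEq hsq))
  have hnorm : ‖(‖w‖ : ℂ) ^ 2 - 1‖ = 1 - ‖w‖ ^ 2 := by
    rw [norm_sub_rev, ← ofReal_pow, ← ofReal_one, ← ofReal_sub, norm_real, Real.norm_of_nonneg]
    nlinarith [norm_nonneg w]
  rw [norm_mul, norm_mul, norm_mul, norm_ofNat, hnorm, ← hs₀] at heq
  linear_combination heq

namespace IsNormalizedUnivalent

variable {U : Set ℂ} {z₀ : ℂ}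

theorem discInvolution_comp {s : ℂ → ℂ} (hd : DifferentiableOn ℂ s U) (hinj : InjOn s U)
    (hmaps : MapsTo s U (ball 0 1)) (hz₀ : z₀ ∈ U) :
    IsNormalizedUnivalent U z₀ (discInvolution (s z₀) ∘ s) where
  differentiableOn := (differentiableOn_discInvolution (hmaps hz₀)).comp hd hmaps
  injOn := (injOn_discInvolution (hmaps hz₀)).comp hinj hmaps
  mapsTo := (mapsTo_discInvolution (hmaps hz₀)).comp hmaps
  map_base := discInvolution_self _

theorem exists_sq_eq_discInvolution_comp {f : ℂ → ℂ} (hf : IsNormalizedUnivalent U z₀ f)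
    (hU : IsOpen U) (hsc : IsSimplyConnected U) {w : ℂ} (hw : w ∈ ball (0 : ℂ) 1 \ f '' U) :
    ∃ s : ℂ → ℂ, DifferentiableOn ℂ s U ∧ InjOn s U ∧ MapsTo s U (ball 0 1) ∧
      ∀ z, s z ^ 2 = discInvolution w (f z) := by
  have hnz : ∀ z ∈ U, discInvolution w (f z) ≠ 0 := fun z hz h => hw.2
    ⟨z, hz, injOn_discInvolution hw.1 (hf.mapsTo hz) hw.1 (by rw [h, discInvolution_self])⟩
  obtain ⟨s, hs, (hsq : ∀ z, s z ^ 2 = discInvolution w (f z))⟩ :=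
    exists_differentiableOn_sq_eq hU hsc
    ((differentiableOn_discInvolution hw.1).comp hf.differentiableOn hf.mapsTo) hnz
  refine ⟨s, hs, fun a ha b hb hab => ?_, fun z hz => ?_, hsq⟩
  · exact hf.injOn ha hb (injOn_discInvolution hw.1 (hf.mapsTo ha) (hf.mapsTo hb)
      (by rw [← hsq a, ← hsq b, hab]))
  · have := mem_ball_zero_iff.1 (mapsTo_discInvolution hw.1 (hf.mapsTo hz))
    rw [← hsq z, norm_pow] at this
    exact mem_ball_zero_iff.2 ((sq_lt_one_iff₀ (norm_nonneg _)).1 this)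

/-- Koebe's trick: `discInvolution w ∘ f` omits `0`, so it has a square root `s`, and since squaring
contracts the hyperbolic metric, `s` has larger hyperbolic derivative at `z₀` than `f`. -/
theorem exists_norm_deriv_lt {f : ℂ → ℂ} (hf : IsNormalizedUnivalent U z₀ f)
    (hU : IsOpen U) (hsc : IsSimplyConnected U) (hz₀ : z₀ ∈ U) (hf' : deriv f z₀ ≠ 0)
    {w : ℂ} (hw : w ∈ ball (0 : ℂ) 1 \ f '' U) :
    ∃ g, IsNormalizedUnivalent U z₀ g ∧ ‖deriv f z₀‖ < ‖deriv g z₀‖ := by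
  obtain ⟨s, hs, hsinj, hsmaps, hsq⟩ := hf.exists_sq_eq_discInvolution_comp hU hsc hw
  refine ⟨_, discInvolution_comp hs hsinj hsmaps hz₀, ?_⟩
  have hs' := hs.differentiableAt (hU.mem_nhds hz₀)
  have ht1 : ‖s z₀‖ < 1 := mem_ball_zero_iff.1 (hsmaps hz₀)
  have hderiv := norm_deriv_of_sq_eq_discInvolution_comp (mem_ball_zero_iff.1 hw.1)
    (hf.differentiableOn.differentiableAt (hU.mem_nhds hz₀)) hs' hf.map_base (.of_forall hsq)
  rw [norm_deriv_discInvolution_comp_self hs' ht1]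
  have ht0 : 0 < ‖s z₀‖ := by
    refine norm_pos_iff.2 fun h => hw.2 ⟨z₀, hz₀, ?_⟩
    simpa [h, hf.map_base] using hsq z₀
  set t := ‖s z₀‖
  have hden : 0 < 1 - t ^ 2 := by nlinarith
  rw [lt_div_iff₀ hden]
  -- after cancelling `1 - t ^ 2`, the gain factor is `(1 + t ^ 2) / (2 * t) > 1`
  have hgain : 0 < (1 - t) ^ 2 * (1 - t ^ 2) * ‖deriv f z₀‖ :=
    mul_pos (mul_pos (pow_pos (sub_pos.2 ht1) 2) hden) (norm_pos_iff.2 hf')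
  nlinarith

end IsNormalizedUnivalent

/-- `φ` maps `U` biholomorphically onto `V`, with inverse `ψ`. Both maps are total functions whose
values off `U` and `V` are irrelevant. -/
structure IsBiholomorphism (φ ψ : ℂ → ℂ) (U V : Set ℂ) : Prop where
  differentiableOn : DifferentiableOn ℂ φ U
  differentiableOn_symm : DifferentiableOn ℂ ψ V
  mapsTo : MapsTo φ U V
  mapsTo_symm : MapsTo ψ V U
  invOn : InvOn ψ φ U V

theorem isBiholomorphism_invFunOn {f : ℂ → ℂ} {U : Set ℂ} (hU : IsOpen U)
    (hf : DifferentiableOn ℂ f U) (hinj : InjOn f U) :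
    IsBiholomorphism f (Function.invFunOn f U) U (f '' U) where
  differentiableOn := hf
  differentiableOn_symm := differentiableOn_image_of_leftInvOn hU hf hinj.leftInvOn_invFunOn
  mapsTo := mapsTo_image f U
  mapsTo_symm := (surjOn_image f U).mapsTo_invFunOn
  invOn := ⟨hinj.leftInvOn_invFunOn, (surjOn_image f U).rightInvOn_invFunOn⟩

theorem exists_isBiholomorphism_ball {U : Set ℂ} (hU : IsOpen U) (hb : Bornology.IsBounded U)
    (hsc : IsSimplyConnected U) {z₀ : ℂ} (hz₀ : z₀ ∈ U) :
    ∃ φ ψ : ℂ → ℂ, IsBiholomorphism φ ψ U (ball 0 1) ∧ φ z₀ = 0 := by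
  obtain ⟨f, hf, hf', hmax⟩ := IsNormalizedUnivalent.exists_norm_deriv_max hU
    hsc.isPathConnected.isConnected.isPreconnected hz₀
    (IsNormalizedUnivalent.exists_of_isBounded hb z₀)
  have himage : f '' U = ball 0 1 := by
    refine hf.mapsTo.image_subset.antisymm fun w hw => by_contra fun hwf => ?_
    obtain ⟨g, hg, hlt⟩ := hf.exists_norm_deriv_lt hU hsc hz₀ hf' ⟨hw, hwf⟩
    exact hlt.not_ge (hmax g hg)
  exact ⟨f, _, himage ▸ isBiholomorphism_invFunOn hU hf.differentiableOn hf.injOn, hf.map_base⟩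

namespace IsBiholomorphism

variable {φ ψ : ℂ → ℂ} {U V : Set ℂ}

theorem const_mul (h : IsBiholomorphism φ ψ U (ball 0 1)) {u : ℂ} (hu : ‖u‖ = 1) :
    IsBiholomorphism (fun z => u * φ z) (fun w => ψ (conj u * w)) U (ball 0 1) := by
  have hmul : conj u * u = 1 := by simp [conj_mul', hu]
  have hrot : MapsTo (fun w : ℂ => conj u * w) (ball 0 1) (ball 0 1) := fun w hw => by
    simpa [hu] using hw
  refine ⟨h.differentiableOn.const_mul u,
    h.differentiableOn_symm.comp (by fun_prop) hrot, fun z hz => ?_, h.mapsTo_symm.comp hrot,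
    fun z hz => ?_, fun w hw => ?_⟩
  · simpa [hu] using h.mapsTo hz
  · simp only [← mul_assoc, hmul, one_mul, h.invOn.1 hz]
  · simp only [h.invOn.2 (hrot hw), ← mul_assoc, (mul_comm u _).trans hmul, one_mul]

theorem conj_conj (h : IsBiholomorphism φ ψ U V) (hU : IsOpen U) (hV : IsOpen V)
    (hUconj : MapsTo conj U U) (hVconj : MapsTo conj V V) :
    IsBiholomorphism (conj ∘ φ ∘ conj) (conj ∘ ψ ∘ conj) U V where
  differentiableOn z hz := (differentiableAt_conj_conj_iff.2
    (h.differentiableOn.differentiableAt (hU.mem_nhds (hUconj hz)))).differentiableWithinAt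
  differentiableOn_symm w hw := (differentiableAt_conj_conj_iff.2
    (h.differentiableOn_symm.differentiableAt (hV.mem_nhds (hVconj hw)))).differentiableWithinAt
  mapsTo := hVconj.comp (h.mapsTo.comp hUconj)
  mapsTo_symm := hUconj.comp (h.mapsTo_symm.comp hVconj)
  invOn := ⟨fun z hz => by simp [h.invOn.1 (hUconj hz)], fun w hw => by
    simp [h.invOn.2 (hVconj hw)]⟩

theorem norm_le_norm_of_mapsTo_ball (h : IsBiholomorphism φ ψ U (ball 0 1)) {g : ℂ → ℂ}
    (hg : DifferentiableOn ℂ g U) (hgmaps : MapsTo g U (ball 0 1)) {a z : ℂ} (ha : a ∈ U)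
    (hφa : φ a = 0) (hga : g a = 0) (hz : z ∈ U) : ‖g z‖ ≤ ‖φ z‖ := by
  have hψ : ψ 0 = a := by rw [← hφa, h.invOn.1 ha]
  have hschwarz := Complex.norm_le_norm_of_mapsTo_ball
    (hg.comp h.differentiableOn_symm h.mapsTo_symm)
    ((hgmaps.comp h.mapsTo_symm).mono_right ball_subset_closedBall) (by simp [hψ, hga])
    (mem_ball_zero_iff.1 (h.mapsTo hz))
  simpa [h.invOn.1 hz] using hschwarz

end IsBiholomorphism

theorem re_conj_mul_pos_of_norm_discInvolution_le {b w : ℂ} (hb : b ≠ 0) (hb1 : ‖b‖ < 1)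
    (hw : ‖w‖ < 1) (h : ‖discInvolution b w‖ ≤ ‖w‖) : 0 < (conj b * w).re := by
  have hden : 0 < ‖1 - conj b * w‖ := norm_pos_iff.2 (one_sub_conj_mul_ne_zero hb1 hw.le)
  rw [discInvolution, norm_div, div_le_iff₀ hden, ← sq_le_sq₀ (norm_nonneg _) (by positivity),
    mul_pow, ← normSq_eq_norm_sq, ← normSq_eq_norm_sq, ← normSq_eq_norm_sq] at h
  have hw' : normSq w < 1 := by rw [normSq_eq_norm_sq]; nlinarith [norm_nonneg w]
  have hexpand : normSq (b - w) = normSq b + normSq w - 2 * (conj b * w).re ∧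
      normSq (1 - conj b * w) = 1 + normSq b * normSq w - 2 * (conj b * w).re := by
    constructor <;>
    · simp only [normSq_apply, sub_re, sub_im, mul_re, mul_im, conj_re, conj_im, one_re, one_im]
      ring
  rw [hexpand.1, hexpand.2] at h
  have hpos : 0 < normSq b * ((1 - normSq w) * (1 + normSq w)) :=
    mul_pos (normSq_pos.2 hb) (mul_pos (by linarith) (by linarith [normSq_nonneg w]))
  exact pos_of_mul_pos_left (b := 1 - normSq w) (by nlinarith) (by linarith)

/-- Conjugation is a hyperbolic isometry of `Ω`, so a real point is equidistant from `z₀` and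
`conj z₀`. The disc points that are no closer to `0` than to `b` lie in the open half plane
`0 < (conj b * w).re`, which a rotation turns into the upper one. -/
theorem exists_isBiholomorphism_ball_im_pos {Ω : Set ℂ} (hΩ : IsOpen Ω)
    (hb : Bornology.IsBounded Ω) (hsc : IsSimplyConnected Ω) (hconj : MapsTo conj Ω Ω) {z₀ : ℂ}
    (hz₀ : z₀ ∈ Ω) (him : z₀.im ≠ 0) :
    ∃ φ ψ : ℂ → ℂ, IsBiholomorphism φ ψ Ω (ball 0 1) ∧ φ z₀ = 0 ∧
      ∀ x ∈ Ω, x.im = 0 → 0 < (φ x).im := by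
  obtain ⟨φ, ψ, h, hφ₀⟩ := exists_isBiholomorphism_ball hΩ hb hsc hz₀
  set b := φ (conj z₀) with hb_def
  have hbmem : b ∈ ball (0 : ℂ) 1 := h.mapsTo (hconj hz₀)
  have hb0 : b ≠ 0 := fun hb0 => him <| conj_eq_iff_im.1 <|
    h.invOn.1.injOn (hconj hz₀) hz₀ (by rw [← hb_def, hb0, hφ₀])
  have hunit : ‖I * conj b / ‖b‖‖ = 1 := by simp [hb0]
  refine ⟨_, _, h.const_mul hunit, by simp [hφ₀], fun x hx hxim => ?_⟩
  have hsymm := h.conj_conj hΩ isOpen_ball hconj fun w hw => by simpa using hw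
  have hle : ‖discInvolution b (φ x)‖ ≤ ‖φ x‖ := by
    simpa [conj_eq_iff_im.2 hxim] using hsymm.norm_le_norm_of_mapsTo_ball
      ((differentiableOn_discInvolution hbmem).comp h.differentiableOn h.mapsTo)
      ((mapsTo_discInvolution hbmem).comp h.mapsTo) (hconj hz₀) (by simp [hφ₀])
      (discInvolution_self b) hx
  have hpos := re_conj_mul_pos_of_norm_discInvolution_le hb0 (mem_ball_zero_iff.1 hbmem)
    (mem_ball_zero_iff.1 (h.mapsTo hx)) hle
  have heq : I * conj b / ‖b‖ * φ x = I * (conj b * φ x) / ‖b‖ := by ring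
  rw [heq, div_ofReal_im, I_mul_im]
  exact div_pos hpos (norm_pos_iff.2 hb0)

/-! ### Harmonic functions -/

theorem IsHarmonicOn.harmonicOnNhd {G : ℂ → ℝ} {U : Set ℂ} (h : IsHarmonicOn G U)
    (hU : IsOpen U) : HarmonicOnNhd G U := by
  intro z hz
  refine ⟨h.1.contDiffAt (hU.mem_nhds hz), ?_⟩
  filter_upwards [hU.mem_nhds hz] with w hw
  have hd : DifferentiableAt ℝ (fderiv ℝ G) w :=
    ((h.1.contDiffAt (hU.mem_nhds hw)).fderiv_right (m := 1) (by norm_num)).differentiableAt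
      one_ne_zero
  have hlaplacian := h.2 w hw
  rw [fderiv_clm_apply hd (by fun_prop), fderiv_clm_apply hd (by fun_prop)] at hlaplacian
  simpa [laplacian_eq_iteratedFDeriv_complexPlane, iteratedFDeriv_two_apply] using hlaplacian

theorem exists_analyticAt_eventuallyEq_re {u : ℂ → ℝ} {z : ℂ} (hu : HarmonicAt u z) :
    ∃ F : ℂ → ℂ, AnalyticAt ℂ F z ∧ u =ᶠ[𝓝 z] fun w => (F w).re := by
  obtain ⟨r, hr, hball⟩ := Metric.eventually_nhds_iff_ball.1 hu.eventually
  obtain ⟨F, hF, heq⟩ := HarmonicOnNhd.exists_analyticOnNhd_ball_re_eq hball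
  exact ⟨F, hF z (mem_ball_self hr), (heq.eventuallyEq_of_mem (ball_mem_nhds z hr)).symm⟩

theorem harmonicAt_comp_analyticAt {u : ℂ → ℝ} {f : ℂ → ℂ} {z : ℂ} (hu : HarmonicAt u (f z))
    (hf : AnalyticAt ℂ f z) : HarmonicAt (u ∘ f) z := by
  obtain ⟨F, hF, heq⟩ := exists_analyticAt_eventuallyEq_re hu
  exact (harmonicAt_congr_nhds (heq.comp_tendsto hf.continuousAt)).2 (hF.comp hf).harmonicAt_re

theorem harmonicAt_comp_conj {u : ℂ → ℝ} {z : ℂ} (hu : HarmonicAt u (conj z)) :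
    HarmonicAt (u ∘ conj) z := by
  obtain ⟨F, hF, heq⟩ := exists_analyticAt_eventuallyEq_re hu
  have hFconj : AnalyticAt ℂ (conj ∘ F ∘ conj) z := by
    rw [analyticAt_iff_eventually_differentiableAt] at hF ⊢
    filter_upwards [(continuous_conj.tendsto z).eventually hF] with w hw
    exact differentiableAt_conj_conj_iff.2 hw
  refine (harmonicAt_congr_nhds ?_).2 hFconj.harmonicAt_re
  filter_upwards [(continuous_conj.tendsto z).eventually heq] with w hw
  simpa using hw

theorem eventually_eq_of_isLocalMax_harmonicAt {u : ℂ → ℝ} {z : ℂ} (hu : HarmonicAt u z)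
    (hmax : IsLocalMax u z) : ∀ᶠ w in 𝓝 z, u w = u z := by
  obtain ⟨F, hF, heq⟩ := exists_analyticAt_eventuallyEq_re hu
  have hnorm : ∀ᶠ w in 𝓝 z, ‖exp (F w)‖ = Real.exp (u w) :=
    heq.mono fun w hw => by rw [norm_exp, hw]
  have hexp : ∀ᶠ w in 𝓝 z, exp (F w) = exp (F z) := by
    refine eventually_eq_of_isLocalMax_norm
      (hF.cexp.eventually_analyticAt.mono fun w hw => hw.differentiableAt) ?_
    filter_upwards [hnorm, hmax] with w hw hle
    simpa only [Function.comp_apply, hw, hnorm.self_of_nhds, Real.exp_le_exp] using hle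
  filter_upwards [hexp, hnorm] with w hw hw'
  rw [← Real.exp_injective.eq_iff, ← hw', ← hnorm.self_of_nhds, hw]

theorem eqOn_of_preconnected_of_eventuallyEq_harmonic {u v : ℂ → ℝ} {U : Set ℂ}
    (hu : HarmonicOnNhd u U) (hv : HarmonicOnNhd v U) (hU : IsPreconnected U) {z : ℂ}
    (hz : z ∈ U) (h : u =ᶠ[𝓝 z] v) : EqOn u v U :=
  AnalyticOnNhd.eqOn_of_preconnected_of_eventuallyEq
    (fun w hw => HarmonicAt.analyticAt (hu w hw)) (fun w hw => HarmonicAt.analyticAt (hv w hw))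
    hU hz h

theorem le_of_harmonic_of_le_frontier {u : ℂ → ℝ} {U : Set ℂ} (hb : Bornology.IsBounded U)
    (hU : IsOpen U) (hc : ContinuousOn u (closure U)) (hu : HarmonicOnNhd u U) {c : ℝ}
    (hle : ∀ z ∈ frontier U, u z ≤ c) {z : ℂ} (hz : z ∈ closure U) : u z ≤ c := by
  by_contra! hlt
  obtain ⟨m, hm, hmax⟩ := hb.isCompact_closure.exists_isMaxOn ⟨z, hz⟩ hc
  set K := closure U ∩ u ⁻¹' {u m}
  have hKclosed : IsClosed K := hc.preimage_isClosed_of_isClosed isClosed_closure isClosed_singleton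
  have hKU : K ⊆ U := fun w ⟨hwU, hw⟩ => by
    by_contra hwU'
    have : u w ≤ c := hle w ⟨hwU, by rwa [hU.interior_eq]⟩
    have : u z ≤ u m := hmax hz
    rw [mem_preimage, mem_singleton_iff] at hw
    linarith
  have hKopen : IsOpen K := isOpen_iff_mem_nhds.2 fun w hw => by
    have hnhds := hU.mem_nhds (hKU hw)
    have hwm : u w = u m := hw.2
    have hmaxw : IsLocalMax u w := mem_of_superset hnhds fun y hy =>
      (hmax (subset_closure hy)).trans hwm.ge
    filter_upwards [hnhds, eventually_eq_of_isLocalMax_harmonicAt (hu w (hKU hw)) hmaxw] with y hy h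
    exact ⟨subset_closure hy, h.trans hwm⟩
  have hKuniv : K = univ := IsClopen.eq_univ ⟨hKclosed, hKopen⟩ ⟨m, hm, rfl⟩
  exact noncompact_univ ℂ (hKuniv ▸ hb.isCompact_closure.of_isClosed_subset hKclosed
    inter_subset_left)

theorem eqOn_closure_of_harmonic_of_le_frontier {u : ℂ → ℝ} {U : Set ℂ}
    (hb : Bornology.IsBounded U) (hU : IsOpen U) (hpre : IsPreconnected U)
    (hc : ContinuousOn u (closure U)) (hu : HarmonicOnNhd u U) {z : ℂ} (hz : z ∈ U)
    (hle : ∀ w ∈ frontier U, u w ≤ u z) : EqOn u (fun _ => u z) (closure U) := by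
  have hmax : IsLocalMax u z := mem_of_superset (hU.mem_nhds hz) fun w hw =>
    le_of_harmonic_of_le_frontier hb hU hc hu hle (subset_closure hw)
  have hconst : EqOn u (fun _ => u z) U :=
    eqOn_of_preconnected_of_eventuallyEq_harmonic hu (fun _ _ => harmonicAt_const _) hpre hz
      (eventually_eq_of_isLocalMax_harmonicAt (hu z hz) hmax)
  exact hconst.of_subset_closure hc continuousOn_const subset_closure Subset.rfl

theorem im_sq_sub_mul_of_mem_sphere {p z Q : ℂ} {r : ℝ} (hz : z ∈ sphere p r) :
    (((z - p) ^ 2 - r ^ 2) * Q).im = 2 * (((z - p) * Q).re * (z - p).im) := by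
  have hr : (r : ℂ) ^ 2 = (z - p) * conj (z - p) := by
    rw [mul_conj', ← mem_sphere_iff_norm.1 hz]
  have hfactor : ((z - p) ^ 2 - r ^ 2) * Q = (2 * (z - p).im : ℝ) * (I * ((z - p) * Q)) := by
    linear_combination (z - p) * Q * sub_conj (z - p) - Q * hr
  rw [hfactor, im_ofReal_mul, I_mul_im]
  ring

/-- A Hopf lemma without barriers: the harmonic function
`(((z - p) ^ 2 - r ^ 2) * (F z / (z - p))).im` vanishes at `p`, while on the circle of radius `r` it
is twice `(F z).re * (z - p).im`. -/
theorem eventually_re_mul_im_eq_zero {F : ℂ → ℂ} {p : ℂ} (hF : AnalyticAt ℂ F p)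
    (hFp : F p = 0) (hF' : deriv F p = 0) (hle : ∀ᶠ z in 𝓝 p, (F z).re * (z - p).im ≤ 0) :
    ∀ᶠ z in 𝓝 p, (F z).re * (z - p).im = 0 := by
  have hfactor (z : ℂ) : F z = (z - p) * dslope F p z := by
    rw [← smul_eq_mul, sub_smul_dslope, hFp, sub_zero]
  obtain ⟨_, hseries⟩ := hF
  obtain ⟨R, hR, hball⟩ := Metric.eventually_nhds_iff_ball.1
    (hseries.has_fpower_series_dslope_fslope.analyticAt.eventually_analyticAt.and hle)
  filter_upwards [ball_mem_nhds p hR] with z hz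
  rcases eq_or_ne z p with rfl | hzp
  · simp
  have hr : 0 < dist z p := dist_pos.2 hzp
  have hsub : closedBall p (dist z p) ⊆ ball p R := closedBall_subset_ball hz
  set h : ℂ → ℝ := fun w => (((w - p) ^ 2 - (dist z p : ℝ) ^ 2) * dslope F p w).im with hh
  have hharm : HarmonicOnNhd h (closedBall p (dist z p)) := fun w hw => by
    have hQ := (hball w (hsub hw)).1
    exact AnalyticAt.harmonicAt_im (by fun_prop)
  have hhp : h p = 0 := by simp [hh, dslope_same, hF']
  have hsphere : ∀ w ∈ sphere p (dist z p), h w = 2 * ((F w).re * (w - p).im) := fun w hw => by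
    rw [hfactor]
    exact im_sq_sub_mul_of_mem_sphere hw
  have hzero := eqOn_closure_of_harmonic_of_le_frontier isBounded_ball isOpen_ball
    (convex_ball p _).isPreconnected (fun w hw => (hharm w (by
      rwa [closure_ball p hr.ne'] at hw)).1.continuousAt.continuousWithinAt)
    (fun w hw => hharm w (ball_subset_closedBall hw)) (mem_ball_self hr) (fun w hw => by
      rw [frontier_ball p hr.ne'] at hw
      rw [hsphere w hw, hhp]
      linarith [(hball w (hsub (sphere_subset_closedBall hw))).2])
  have hhz : h z = 0 := by
    rw [hzero (by rw [closure_ball p hr.ne']; exact mem_closedBall.2 le_rfl), hhp]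
  linarith [hsphere z (mem_sphere.2 rfl)]

theorem eventually_mul_im_eq_zero_of_harmonicAt {u : ℂ → ℝ} {p : ℂ} (hu : HarmonicAt u p)
    (hup : u p = 0) (hu' : fderiv ℝ u p = 0) (hle : ∀ᶠ z in 𝓝 p, u z * (z - p).im ≤ 0) :
    ∀ᶠ z in 𝓝 p, u z * (z - p).im = 0 := by
  obtain ⟨F, hF, heq⟩ := exists_analyticAt_eventuallyEq_re hu
  have hre : ∀ᶠ z in 𝓝 p, (F z - F p).re = u z := heq.mono fun z hz => by
    have hFp : (F p).re = 0 := heq.self_of_nhds.symm.trans hup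
    rw [sub_re, hFp, sub_zero, hz]
  have hderiv : deriv F p = 0 := by
    have hfderiv := reCLM.hasFDerivAt.comp p hF.differentiableAt.hasDerivAt.complexToReal_fderiv
    have h0 := (hfderiv.congr_of_eventuallyEq heq).fderiv.symm.trans hu'
    refine Complex.ext ?_ ?_
    · simpa using DFunLike.congr_fun h0 1
    · simpa using DFunLike.congr_fun h0 I
  have hzero := eventually_re_mul_im_eq_zero (F := fun z => F z - F p)
    (hF.sub analyticAt_const) (sub_self _) (by rwa [deriv_sub_const])
    (by filter_upwards [hre, hle] with z hz hz'; rwa [hz])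
  filter_upwards [hre, hzero] with z hz h
  rwa [← hz]

/-! ### Condenser potentials and reflection -/

/-- `G` is the equilibrium potential of the condenser with plates `E` and `frontier Ω`, that is,
the harmonic measure of `frontier Ω` seen from `Ω \ E`; its values off `closure Ω` are
unconstrained. -/
structure IsCondenserPotential (G : ℂ → ℝ) (Ω E : Set ℂ) : Prop where
  continuousOn : ContinuousOn G (closure Ω)
  eq_one : ∀ z ∈ frontier Ω, G z = 1
  eq_zero : ∀ z ∈ E, G z = 0
  harmonicOnNhd : HarmonicOnNhd G (Ω \ E)

theorem mem_closure_inter_strip {C : Set ℂ} (hC : Convex ℝ C) {p e : ℂ} (hp : p ∈ C)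
    (hpim : p.im = 0) (he : e ∈ C) (heim : 0 < e.im) :
    e ∈ closure (C ∩ ({z | z.im < e.im} ∩ {z | -e.im < z.im})) := by
  refine closure_mono ?_ (segment_subset_closure_openSegment (right_mem_segment ℝ p e))
  rintro _ ⟨a, b, ha, hb, hab, rfl⟩
  have him : (a • p + b • e).im = b * e.im := by simp [hpim]
  have hlt : b * e.im < e.im := mul_lt_of_lt_one_left heim (by linarith)
  have hpos : 0 < b * e.im := mul_pos hb heim
  exact ⟨hC hp he ha.le hb.le hab, him.trans_lt hlt,
    ((neg_neg_of_pos heim).trans hpos).trans_eq him.symm⟩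

namespace IsCondenserPotential

variable {G : ℂ → ℝ} {Ω E : Set ℂ}

theorem nonneg (hG : IsCondenserPotential G Ω E) (hΩ : IsOpen Ω) (hb : Bornology.IsBounded Ω)
    (hE : IsClosed E) {z : ℂ} (hz : z ∈ closure Ω) : 0 ≤ G z := by
  have hopen : IsOpen (Ω \ E) := hΩ.sdiff hE
  have hfrontier (w : ℂ) (hw : w ∈ closure Ω) (hwE : w ∉ Ω \ E) : 0 ≤ G w := by
    by_cases hwE' : w ∈ E
    · exact (hG.eq_zero w hwE').ge
    · rw [hG.eq_one w ⟨hw, fun h => hwE ⟨interior_subset h, hwE'⟩⟩]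
      exact zero_le_one
  by_cases hzU : z ∈ Ω \ E
  · have hsub : closure (Ω \ E) ⊆ closure Ω := closure_mono sdiff_subset
    refine neg_nonpos.1 (le_of_harmonic_of_le_frontier (u := -G) (hb.subset sdiff_subset) hopen
      (hG.continuousOn.mono hsub).neg hG.harmonicOnNhd.neg (fun w hw => ?_) (subset_closure hzU))
    exact neg_nonpos.2 (hfrontier w (hsub hw.1) (hopen.interior_eq ▸ hw.2))
  · exact hfrontier z hz hzU

theorem comp_conj_le (hG : IsCondenserPotential G Ω E) (hΩ : IsOpen Ω)
    (hb : Bornology.IsBounded Ω) (hconj : MapsTo conj Ω Ω) (hE : IsClosed E)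
    (hEpos : ∀ e ∈ E, 0 < e.im) {z : ℂ} (hz : z ∈ Ω) (hzim : z.im ≤ 0) :
    G (conj z) ≤ G z := by
  set W : Set ℂ := (Ω ∩ {w | w.im < 0}) \ (conj ⁻¹' E)
  have hWopen : IsOpen W :=
    (hΩ.inter (isOpen_lt continuous_im continuous_const)).sdiff (hE.preimage continuous_conj)
  have hconjcl : MapsTo conj (closure Ω) (closure Ω) := hconj.closure continuous_conj
  have hWcl : closure W ⊆ closure Ω := closure_mono fun w hw => hw.1.1
  have hWim : closure W ⊆ {w | w.im ≤ 0} :=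
    closure_minimal (fun w hw => (show w.im < 0 from hw.1.2).le)
      (isClosed_le continuous_im continuous_const)
  have hoff (w : ℂ) (hw : w ∈ closure Ω) (hwim : w.im ≤ 0) (hwW : w ∉ W) :
      G (conj w) - G w ≤ 0 := by
    by_cases hwE : conj w ∈ E
    · rw [hG.eq_zero _ hwE]
      linarith [hG.nonneg hΩ hb hE hw]
    rcases hwim.eq_or_lt with hreal | hneg
    · rw [conj_eq_iff_im.2 hreal, sub_self]
    have hwΩ : w ∉ Ω := fun h => hwW ⟨⟨h, hneg⟩, hwE⟩
    rw [hG.eq_one w ⟨hw, fun h => hwΩ (interior_subset h)⟩,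
      hG.eq_one (conj w) ⟨hconjcl hw, fun h => hwΩ (by simpa using hconj (interior_subset h))⟩,
      sub_self]
  have hharm : HarmonicOnNhd (G ∘ conj - G) W := fun w hw =>
    (harmonicAt_comp_conj (hG.harmonicOnNhd _ ⟨hconj hw.1.1, hw.2⟩)).sub
      (hG.harmonicOnNhd w ⟨hw.1.1, fun h => (hEpos w h).not_gt hw.1.2⟩)
  rw [← sub_nonpos]
  by_cases hzW : z ∈ W
  · exact le_of_harmonic_of_le_frontier (hb.subset fun w hw => hw.1.1) hWopen
      (((hG.continuousOn.comp continuous_conj.continuousOn hconjcl).sub hG.continuousOn).mono hWcl)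
      hharm (fun w hw => hoff w (hWcl hw.1) (hWim hw.1) (hWopen.interior_eq ▸ hw.2))
      (subset_closure hzW)
  · exact hoff z (subset_closure hz) hzim hzW

theorem pos_of_im_neg (hG : IsCondenserPotential G Ω E) (hΩ : IsOpen Ω)
    (hb : Bornology.IsBounded Ω) (hconv : Convex ℝ Ω) (hE : IsClosed E)
    (hEpos : ∀ e ∈ E, 0 < e.im) {z : ℂ} (hz : z ∈ Ω) (hzim : z.im < 0) : 0 < G z := by
  have hnonneg (w : ℂ) (hw : w ∈ closure Ω) : 0 ≤ G w := hG.nonneg hΩ hb hE hw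
  refine (hnonneg z (subset_closure hz)).lt_of_ne' fun hGz => ?_
  set H : Set ℂ := {w | w.im < 0}
  have hL : IsOpen (Ω ∩ H) := hΩ.inter (isOpen_lt continuous_im continuous_const)
  have hLcl : closure (Ω ∩ H) ⊆ closure Ω := closure_mono inter_subset_left
  have hLzero : EqOn (-G) (fun _ => (-G) z) (closure (Ω ∩ H)) := by
    refine eqOn_closure_of_harmonic_of_le_frontier (hb.subset inter_subset_left) hL
      (hconv.inter (convex_halfSpace_im_lt 0)).isPreconnected (hG.continuousOn.mono hLcl).neg
      (fun w hw => (hG.harmonicOnNhd w ⟨hw.1, fun h => (hEpos w h).not_gt hw.2⟩).neg)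
      ⟨hz, hzim⟩ fun w hw => ?_
    simpa [hGz] using hnonneg w (hLcl hw.1)
  have hclosed : closure (Ω ∩ H) ∩ H ⊆ Ω ∩ H := fun w ⟨hw, hwH⟩ => by
    by_contra hwL
    have hGw : -G w = -G z := hLzero hw
    rw [hG.eq_one w ⟨hLcl hw, fun h => hwL ⟨interior_subset h, hwH⟩⟩, hGz] at hGw
    norm_num at hGw
  have hsub : H ⊆ Ω ∩ H := (convex_halfSpace_im_lt 0).isPreconnected.subset_of_closure_inter_subset
    hL ⟨z, hzim, hz, hzim⟩ hclosed
  obtain ⟨R, hR⟩ := hb.exists_norm_le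
  have hR0 : 0 ≤ R := (norm_nonneg z).trans (hR z hz)
  have hfarH : -(R + 1 : ℝ) * I ∈ H := by simpa [H] using neg_one_lt_zero.trans_le hR0
  have hfar := hR _ (hsub hfarH).1
  rw [norm_mul, norm_neg, norm_I, mul_one, norm_real, Real.norm_of_nonneg (by linarith)] at hfar
  linarith

/-- A symmetry of `G` near `p` propagates through the strip up to the lowest point `e` of `E`, so
that `G` would vanish at `conj e`, below the real axis. -/
theorem not_eventually_comp_conj_eq (hG : IsCondenserPotential G Ω E) (hΩ : IsOpen Ω)
    (hb : Bornology.IsBounded Ω) (hconv : Convex ℝ Ω) (hconj : MapsTo conj Ω Ω)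
    (hE : IsCompact E) (hEne : E.Nonempty) (hEΩ : E ⊆ Ω) (hEpos : ∀ e ∈ E, 0 < e.im) {p : ℂ}
    (hp : p ∈ Ω) (hpim : p.im = 0) : ¬ ∀ᶠ z in 𝓝 p, G (conj z) = G z := by
  intro hsymm
  obtain ⟨e, heE, hmin⟩ := hE.exists_isMinOn hEne continuous_im.continuousOn
  have heΩ : e ∈ Ω := hEΩ heE
  set S : Set ℂ := Ω ∩ ({z | z.im < e.im} ∩ {z | -e.im < z.im})
  have hSE : Disjoint S E := Set.disjoint_left.2 fun z hz hzE =>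
    (show z.im < e.im from hz.2.1).not_ge (hmin hzE)
  have hSconj : MapsTo conj S S := fun z hz =>
    ⟨hconj hz.1, by simpa [neg_lt] using hz.2.2, by simpa using hz.2.1⟩
  have hharm : HarmonicOnNhd G S := fun z hz =>
    hG.harmonicOnNhd z ⟨hz.1, hSE.notMem_of_mem_left hz⟩
  have hSpre : IsPreconnected S := (hconv.inter
    ((convex_halfSpace_im_lt _).inter (convex_halfSpace_im_gt _))).isPreconnected
  have hpS : p ∈ S := ⟨hp, by simpa [hpim] using hEpos e heE⟩
  have hEqS : EqOn (G ∘ conj) G S := eqOn_of_preconnected_of_eventuallyEq_harmonic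
    (fun z hz => harmonicAt_comp_conj (hharm _ (hSconj hz))) hharm hSpre hpS hsymm
  have heS : e ∈ closure S := mem_closure_inter_strip hconv hp hpim heΩ (hEpos e heE)
  have hcont : ContinuousOn G Ω := hG.continuousOn.mono subset_closure
  have hGe : G (conj e) = G e := by
    have hclosed := hEqS.of_subset_closure (s := S) (t := closure S ∩ Ω)
      ((hcont.comp continuous_conj.continuousOn hconj).mono inter_subset_right)
      (hcont.mono inter_subset_right) (fun z hz => ⟨subset_closure hz, hz.1⟩) inter_subset_left
    exact hclosed ⟨heS, heΩ⟩
  have hpos := hG.pos_of_im_neg hΩ hb hconv hE.isClosed hEpos (hconj heΩ)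
    (by simpa using hEpos e heE)
  exact hpos.ne' (hGe.trans (hG.eq_zero e heE))

theorem fderiv_ne_zero_of_im_pos (hG : IsCondenserPotential G Ω E) (hΩ : IsOpen Ω)
    (hb : Bornology.IsBounded Ω) (hconv : Convex ℝ Ω) (hconj : MapsTo conj Ω Ω)
    (hE : IsCompact E) (hEne : E.Nonempty) (hEΩ : E ⊆ Ω) (hEpos : ∀ e ∈ E, 0 < e.im) {p : ℂ}
    (hp : p ∈ Ω) (hpim : p.im = 0) : fderiv ℝ G p ≠ 0 := by
  intro hcrit
  have hpconj : conj p = p := conj_eq_iff_im.2 hpim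
  have hharm : HarmonicAt G p := hG.harmonicOnNhd p ⟨hp, fun h => (hEpos p h).ne' hpim⟩
  have hdiff : HasFDerivAt G (0 : ℂ →L[ℝ] ℝ) p :=
    hcrit ▸ (hharm.1.differentiableAt two_ne_zero).hasFDerivAt
  have hodd : HasFDerivAt (G - G ∘ conj) (0 : ℂ →L[ℝ] ℝ) p := by
    rw [← hpconj] at hdiff
    have := hdiff.comp p conjCLE.hasFDerivAt
    rw [hpconj] at hdiff
    simpa using hdiff.sub this
  have hsign : ∀ᶠ z in 𝓝 p, (G - G ∘ conj) z * (z - p).im ≤ 0 := by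
    filter_upwards [hΩ.mem_nhds hp] with z hz
    rw [sub_im, hpim, sub_zero, Pi.sub_apply, Function.comp_apply]
    rcases le_total z.im 0 with hle | hge
    · exact mul_nonpos_of_nonneg_of_nonpos
        (sub_nonneg.2 (hG.comp_conj_le hΩ hb hconj hE.isClosed hEpos hz hle)) hle
    · have hconjle := hG.comp_conj_le hΩ hb hconj hE.isClosed hEpos (hconj hz) (by simpa using hge)
      rw [conj_conj] at hconjle
      exact mul_nonpos_of_nonpos_of_nonneg (sub_nonpos.2 hconjle) hge
  have hzero := eventually_mul_im_eq_zero_of_harmonicAt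
    (hharm.sub (harmonicAt_comp_conj (hpconj.symm ▸ hharm))) (by simp [hpconj]) hodd.fderiv hsign
  refine hG.not_eventually_comp_conj_eq hΩ hb hconv hconj hE hEne hEΩ hEpos hp hpim ?_
  filter_upwards [hzero] with z hz
  rcases mul_eq_zero.1 hz with h | h
  · exact (sub_eq_zero.1 h).symm
  · rw [conj_eq_iff_im.2 (by simpa [hpim] using h)]

end IsCondenserPotential

namespace IsBiholomorphism

variable {φ ψ : ℂ → ℂ} {U V : Set ℂ} {G : ℂ → ℝ}

theorem tendsto_comp_frontier (hφ : IsBiholomorphism φ ψ U V) (hV : IsOpen V)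
    (hb : Bornology.IsBounded U) (hG : ContinuousOn G (closure U)) {c : ℝ}
    (hc : ∀ z ∈ frontier U, G z = c) {w : ℂ} (hw : w ∈ frontier V) :
    Tendsto (G ∘ ψ) (𝓝[V] w) (𝓝 c) := by
  intro N hN
  set K : Set ℂ := closure U ∩ G ⁻¹' (interior N)ᶜ
  have hK : IsCompact K := hb.isCompact_closure.of_isClosed_subset
    (hG.preimage_isClosed_of_isClosed isClosed_closure isOpen_interior.isClosed_compl)
    inter_subset_left
  have hKU : K ⊆ U := fun z ⟨hz, hzN⟩ => by
    by_contra hzU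
    exact hzN (hc z ⟨hz, fun h => hzU (interior_subset h)⟩ ▸ mem_interior_iff_mem_nhds.2 hN)
  have himage : IsClosed (φ '' K) :=
    (hK.image_of_continuousOn (hφ.differentiableOn.continuousOn.mono hKU)).isClosed
  have hwK : w ∉ φ '' K := by
    rintro ⟨z, hz, rfl⟩
    exact hw.2 (hV.interior_eq.symm ▸ hφ.mapsTo (hKU hz))
  rw [mem_map]
  filter_upwards [mem_nhdsWithin_of_mem_nhds (himage.isOpen_compl.mem_nhds hwK),
    self_mem_nhdsWithin] with y hy hyV
  by_contra hyN
  exact hy ⟨ψ y, ⟨subset_closure (hφ.mapsTo_symm hyV), fun h => hyN (interior_subset (s := N) h)⟩,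
    hφ.invOn.2 hyV⟩

theorem isCondenserPotential_piecewise (hφ : IsBiholomorphism φ ψ U V) (hV : IsOpen V)
    (hb : Bornology.IsBounded U) {E : Set ℂ} (hEU : E ⊆ U)
    (hG : IsCondenserPotential G U E) [∀ w, Decidable (w ∈ V)] :
    IsCondenserPotential (V.piecewise (G ∘ ψ) 1) V (φ '' E) where
  continuousOn := by
    have hcomp : ContinuousOn (G ∘ ψ) V := (hG.continuousOn.mono subset_closure).comp
      hφ.differentiableOn_symm.continuousOn hφ.mapsTo_symm
    refine ContinuousOn.piecewise' (fun w hw => ?_) (fun w hw => ?_)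
      (hcomp.mono inter_subset_right) continuousOn_const
    · rw [piecewise_eq_of_notMem _ _ _ (hV.interior_eq ▸ hw.2.2)]
      exact (hφ.tendsto_comp_frontier hV hb hG.continuousOn hG.eq_one hw.2).mono_left
        (nhdsWithin_mono _ inter_subset_right)
    · rw [piecewise_eq_of_notMem _ _ _ (hV.interior_eq ▸ hw.2.2)]
      exact tendsto_const_nhds
  eq_one w hw := piecewise_eq_of_notMem _ _ _ (hV.interior_eq ▸ hw.2)
  eq_zero := by
    rintro _ ⟨z, hz, rfl⟩
    rw [piecewise_eq_of_mem _ _ _ (hφ.mapsTo (hEU hz)), Function.comp_apply, hφ.invOn.1 (hEU hz)]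
    exact hG.eq_zero z hz
  harmonicOnNhd w hw := by
    have hψw : ψ w ∈ U \ E :=
      ⟨hφ.mapsTo_symm hw.1, fun h => hw.2 ⟨ψ w, h, hφ.invOn.2 hw.1⟩⟩
    have heq : V.piecewise (G ∘ ψ) 1 =ᶠ[𝓝 w] G ∘ ψ :=
      (piecewise_eqOn V _ _).eventuallyEq_of_mem (hV.mem_nhds hw.1)
    exact (harmonicAt_congr_nhds heq).2 (harmonicAt_comp_analyticAt (hG.harmonicOnNhd _ hψw)
      (hφ.differentiableOn_symm.analyticAt (hV.mem_nhds hw.1)))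

theorem fderiv_piecewise_eq_zero (hφ : IsBiholomorphism φ ψ U V) (hV : IsOpen V) {w : ℂ}
    (hw : w ∈ V) (hG : DifferentiableAt ℝ G (ψ w)) (hcrit : fderiv ℝ G (ψ w) = 0)
    [∀ w, Decidable (w ∈ V)] : fderiv ℝ (V.piecewise (G ∘ ψ) 1) w = 0 := by
  have heq : V.piecewise (G ∘ ψ) 1 =ᶠ[𝓝 w] G ∘ ψ :=
    (piecewise_eqOn V _ _).eventuallyEq_of_mem (hV.mem_nhds hw)
  have hψ : DifferentiableAt ℂ ψ w := hφ.differentiableOn_symm.differentiableAt (hV.mem_nhds hw)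
  rw [heq.fderiv_eq, fderiv_comp w hG (hψ.restrictScalars ℝ), hcrit,
    ContinuousLinearMap.zero_comp]

end IsBiholomorphism

/-- **Theorem 7.2 (i).** The Green-type function `G` has no critical points
off the real axis. -/
theorem green_function_no_critical_points_off_real_axis
    (Ω : Set ℂ) (hΩopen : IsOpen Ω) (hΩbdd : Bornology.IsBounded Ω)
    (hΩsc : SimplyConnectedSpace Ω)
    (hΩconj : (fun z => (starRingEnd ℂ) z) '' Ω = Ω)
    (E : Set ℂ) (hEne : E.Nonempty) (hEcpt : IsCompact E)
    (hEsub : E ⊆ Ω) (hEreal : ∀ z ∈ E, z.im = 0)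
    (G : ℂ → ℝ) (hGcont : ContinuousOn G (closure Ω))
    (hGbdry : ∀ z ∈ frontier Ω, G z = 1)
    (hGzero : ∀ z ∈ E, G z = 0)
    (hGharm : IsHarmonicOn G (Ω \ E)) :
    ∀ z ∈ Ω \ E, z.im ≠ 0 → fderiv ℝ G z ≠ 0 := by
  classical
  intro z hz hzim hcrit
  have hG : IsCondenserPotential G Ω E :=
    ⟨hGcont, hGbdry, hGzero, hGharm.harmonicOnNhd (hΩopen.sdiff hEcpt.isClosed)⟩
  obtain ⟨φ, ψ, hφ, hφz, hφpos⟩ := exists_isBiholomorphism_ball_im_pos hΩopen hΩbdd hΩsc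
    (mapsTo_iff_image_subset.2 hΩconj.subset) hz.1 hzim
  have hψ0 : ψ 0 = z := hφz ▸ hφ.invOn.1 hz.1
  have hφE : IsCompact (φ '' E) :=
    hEcpt.image_of_continuousOn (hφ.differentiableOn.continuousOn.mono hEsub)
  have hdisc : MapsTo conj (ball (0 : ℂ) 1) (ball 0 1) := fun w hw => by simpa using hw
  have hdiffG : DifferentiableAt ℝ G z := (hG.harmonicOnNhd z hz).1.differentiableAt two_ne_zero
  have hcrit₀ := hφ.fderiv_piecewise_eq_zero isOpen_ball (mem_ball_self one_pos)
    (hψ0 ▸ hdiffG) (hψ0 ▸ hcrit)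
  have hpotential := hφ.isCondenserPotential_piecewise isOpen_ball hΩbdd hEsub hG
  refine hpotential.fderiv_ne_zero_of_im_pos isOpen_ball isBounded_ball (convex_ball 0 1) hdisc hφE
    (hEne.image φ) (hφ.mapsTo.mono_left hEsub).image_subset ?_ (mem_ball_self one_pos) zero_im
    hcrit₀
  rintro _ ⟨e, he, rfl⟩
  exact hφpos e (hEsub he) (hEreal e he)
end
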